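/- arXiv:1301.6826 — 3 statements merged into one kernel-verified Lean document; each statement's English description precedes it below -/
import Mathlib

section
/- Let T and S be subgroups of a finite solvable group G that are both SS-permutable (resp. both NSS-permutable) in G and satisfy gcd(|T|,|S|) = 1. Then the subgroup ⟨T, S⟩ generated by T and S is SS-permutable (resp. NSS-permutable) in G. Moreover, if T and S are of prime power order, the conclusion holds without assuming G solvable. -/
open scoped Pointwise

section Defs

variable {G : Type*} [Group G]

/-- `K` is an SS-permutable supplement of `H` in `G`: `HK = G` and `H` permutes with
every Sylow subgroup of `K`. -/
def IsSSSupplement (H K : Subgroup G) : Prop :=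
  (H : Set G) * (K : Set G) = Set.univ ∧
    ∀ (p : ℕ) [Fact p.Prime] (P : Sylow p K),
      (H : Set G) * ((P.toSubgroup.map K.subtype : Subgroup G) : Set G) =
        ((P.toSubgroup.map K.subtype : Subgroup G) : Set G) * (H : Set G)

/-- `H` is SS-permutable in `G`: `H` has a supplement `K` such that `H` permutes with
every Sylow subgroup of `K`. -/
def IsSSPermutable (H : Subgroup G) : Prop :=
  ∃ K : Subgroup G, IsSSSupplement H K

/-- `H` is NSS-permutable in `G`: `H` has a normal supplement `K` such that `H` permutes
with every Sylow subgroup of `K`. -/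
def IsNSSPermutable (H : Subgroup G) : Prop :=
  ∃ K : Subgroup G, K.Normal ∧ IsSSSupplement H K

/-- `H` is S-permutable in `G`: it permutes with every Sylow subgroup of `G`. -/
def IsSPermutable (H : Subgroup G) : Prop :=
  ∀ (p : ℕ) [Fact p.Prime] (P : Sylow p G),
    (H : Set G) * ((P : Subgroup G) : Set G) = ((P : Subgroup G) : Set G) * (H : Set G)

/-- `H` is semipermutable in `G`: `HX = XH` for every subgroup `X` with `gcd(|H|,|X|) = 1`. -/
def IsSemipermutable (H : Subgroup G) : Prop :=
  ∀ X : Subgroup G, Nat.Coprime (Nat.card H) (Nat.card X) →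
    (H : Set G) * (X : Set G) = (X : Set G) * (H : Set G)

/-- `H` is S-semipermutable in `G`: `HQ = QH` for every Sylow `q`-subgroup `Q` of `G`
with `q` a prime not dividing `|H|`. -/
def IsSSemipermutable (H : Subgroup G) : Prop :=
  ∀ (q : ℕ) [Fact q.Prime], ¬ q ∣ Nat.card H → ∀ Q : Sylow q G,
    (H : Set G) * ((Q : Subgroup G) : Set G) = ((Q : Subgroup G) : Set G) * (H : Set G)

end Defs

/-- `G` is an SST-group: SS-permutability is a transitive relation. -/
def IsSSTGroup (G : Type*) [Group G] : Prop :=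
  ∀ H K : Subgroup G, H ≤ K → IsSSPermutable (H.subgroupOf K) → IsSSPermutable K →
    IsSSPermutable H

/-- `G` is an NSST-group: NSS-permutability is a transitive relation. -/
def IsNSSTGroup (G : Type*) [Group G] : Prop :=
  ∀ H K : Subgroup G, H ≤ K → IsNSSPermutable (H.subgroupOf K) → IsNSSPermutable K →
    IsNSSPermutable H

/-- `G` is a PST-group: S-permutability is a transitive relation. -/
def IsPSTGroup (G : Type*) [Group G] : Prop :=
  ∀ H K : Subgroup G, H ≤ K → IsSPermutable (H.subgroupOf K) → IsSPermutable K →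
    IsSPermutable H

/-- `G` is a BT-group: semipermutability is a transitive relation. -/
def IsBTGroup (G : Type*) [Group G] : Prop :=
  ∀ H K : Subgroup G, H ≤ K → IsSemipermutable (H.subgroupOf K) → IsSemipermutable K →
    IsSemipermutable H

section

variable {G : Type*} [Group G]

/-- The product of two subgroups is everything iff the relative index is the full index. -/
theorem Subgroup.mul_eq_univ_iff_relIndex_eq_index [Finite G] (H K : Subgroup G) :
    (H : Set G) * (K : Set G) = Set.univ ↔ K.relIndex H = K.index := by
  let f : H ⧸ K.subgroupOf H → G ⧸ K :=
    Quotient.map' Subtype.val fun a b h => by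
      rw [QuotientGroup.leftRel_apply] at h ⊢
      exact h
  have hf : Function.Injective f := by
    rintro ⟨a⟩ ⟨b⟩ h
    exact QuotientGroup.eq.mpr (QuotientGroup.eq.mp h : (a : G)⁻¹ * b ∈ K)
  have hsurj : (H : Set G) * (K : Set G) = Set.univ ↔ Function.Surjective f := by
    constructor
    · rintro h ⟨g⟩
      obtain ⟨a, ha, b, hb, rfl⟩ := Set.mem_mul.mp (h ▸ Set.mem_univ g)
      refine ⟨QuotientGroup.mk ⟨a, ha⟩, QuotientGroup.eq.mpr ?_⟩
      simpa using hb
    · refine fun h => Set.eq_univ_of_forall fun g => ?_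
      obtain ⟨⟨a⟩, ha⟩ := h (QuotientGroup.mk g)
      exact Set.mem_mul.mpr ⟨a, a.2, (a : G)⁻¹ * g, QuotientGroup.eq.mp ha, by group⟩
  rw [hsurj]
  constructor
  · exact fun h => Nat.card_congr (Equiv.ofBijective f ⟨hf, h⟩)
  · exact fun h => (hf.bijective_of_nat_card_le (Nat.le_of_eq h.symm)).2

theorem Subgroup.relIndex_inf_of_coprime [Finite G] (J K L : Subgroup G)
    (h : Nat.Coprime (K.relIndex J) (L.relIndex J)) :
    (K ⊓ L).relIndex J = K.relIndex J * L.relIndex J :=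
  le_antisymm Subgroup.relIndex_inf_le <|
    Nat.le_of_dvd (Nat.pos_of_ne_zero Subgroup.index_ne_zero_of_finite) <|
      h.mul_dvd_of_dvd_of_dvd (Subgroup.relIndex_dvd_of_le_left _ inf_le_left)
        (Subgroup.relIndex_dvd_of_le_left _ inf_le_right)

theorem Subgroup.mul_comm_of_mul_subset {H P : Subgroup G}
    (h : (P : Set G) * (H : Set G) ⊆ (H : Set G) * (P : Set G)) :
    (H : Set G) * (P : Set G) = (P : Set G) * (H : Set G) := by
  refine Set.Subset.antisymm ?_ h
  simpa using Set.inv_subset_inv.mpr h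

theorem Subgroup.coe_sup_of_mul_comm {H K : Subgroup G}
    (h : (H : Set G) * (K : Set G) = (K : Set G) * (H : Set G)) :
    ((H ⊔ K : Subgroup G) : Set G) = (H : Set G) * (K : Set G) := by
  let M : Subgroup G :=
    { carrier := (H : Set G) * (K : Set G)
      one_mem' := ⟨1, H.one_mem, 1, K.one_mem, one_mul 1⟩
      mul_mem' := fun {a b} ha hb => by
        have hab := Set.mul_mem_mul ha hb
        rwa [mul_assoc, ← mul_assoc (K : Set G), ← h, mul_assoc, coe_mul_coe, ← mul_assoc,
          coe_mul_coe] at hab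
      inv_mem' := fun {a} ha => by
        have := Set.inv_mem_inv.mpr ha
        rwa [mul_inv_rev, inv_coe_set, inv_coe_set, ← h] at this }
  refine Set.Subset.antisymm (show H ⊔ K ≤ M from sup_le ?_ ?_) ?_
  · exact fun x hx => ⟨x, hx, 1, K.one_mem, mul_one x⟩
  · exact fun x hx => ⟨1, H.one_mem, x, hx, one_mul x⟩
  · rintro _ ⟨a, ha, b, hb, rfl⟩
    exact mul_mem_sup ha hb

/-- If `P` carries the generators of `T ⊔ S` across into `(T ⊔ S)P`, it permutes with `T ⊔ S`. -/
theorem Subgroup.sup_mul_comm_of_subset {T S P : Subgroup G}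
    (hT : (P : Set G) * (T : Set G) ⊆ ((T ⊔ S : Subgroup G) : Set G) * (P : Set G))
    (hS : (P : Set G) * (S : Set G) ⊆ ((T ⊔ S : Subgroup G) : Set G) * (P : Set G)) :
    ((T ⊔ S : Subgroup G) : Set G) * (P : Set G) =
      (P : Set G) * ((T ⊔ S : Subgroup G) : Set G) := by
  refine mul_comm_of_mul_subset ?_
  rintro _ ⟨x, hx, j, hj, rfl⟩
  revert x
  rw [SetLike.mem_coe, sup_eq_closure] at hj
  induction hj using closure_induction'' with
  | one => exact fun x hx => ⟨1, one_mem _, x, hx, by simp⟩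
  | mem y hy =>
    rcases hy with hy | hy
    · exact fun x hx => hT ⟨x, hx, y, hy, rfl⟩
    · exact fun x hx => hS ⟨x, hx, y, hy, rfl⟩
  | inv_mem y hy =>
    rcases hy with hy | hy
    · exact fun x hx => hT ⟨x, hx, y⁻¹, T.inv_mem hy, rfl⟩
    · exact fun x hx => hS ⟨x, hx, y⁻¹, S.inv_mem hy, rfl⟩
  | mul a b _ _ iha ihb =>
    intro x hx
    obtain ⟨j, hj, y, hy, h⟩ := iha x hx
    obtain ⟨k, hk, z, hz, h'⟩ := ihb y hy
    refine ⟨j * k, mul_mem hj hk, z, hz, ?_⟩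
    simp only at h h' ⊢
    rw [mul_assoc, h', ← mul_assoc, h, mul_assoc]

theorem IsSSSupplement.index_dvd_card [Finite G] {H K : Subgroup G} (h : IsSSSupplement H K) :
    K.index ∣ Nat.card H :=
  (Subgroup.mul_eq_univ_iff_relIndex_eq_index H K).mp h.1 ▸ Subgroup.relIndex_dvd_card _ _

/-- A `p`-subgroup of `K` whose index in `K` is prime to `p` permutes with `H`. -/
theorem IsSSSupplement.mul_comm_of_isPGroup {H K P : Subgroup G} (h : IsSSSupplement H K)
    {p : ℕ} [Fact p.Prime] (hP : IsPGroup p P) (hPK : P ≤ K) (hp : ¬ p ∣ P.relIndex K) :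
    (H : Set G) * (P : Set G) = (P : Set G) * (H : Set G) := by
  have := h.2 p ((hP.comap_subtype (K := K) : IsPGroup p (P.subgroupOf K)).toSylow hp)
  simpa [Subgroup.map_subgroupOf_eq_of_le hPK] using this

theorem IsSSSupplement.mul_comm_sylow [Finite G] {H K : Subgroup G} (h : IsSSSupplement H K)
    {p : ℕ} [Fact p.Prime] (hp : ¬ p ∣ Nat.card H) (X : Sylow p G) :
    (H : Set G) * (X : Set G) = (X : Set G) * (H : Set G) := by
  obtain ⟨Q⟩ : Nonempty (Sylow p K) := inferInstance
  have hQ : ¬ p ∣ (Q.toSubgroup.map K.subtype).index := by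
    rw [Subgroup.index_map_subtype]
    exact Nat.Prime.not_dvd_mul Fact.out Q.not_dvd_index fun hd => hp (hd.trans h.index_dvd_card)
  obtain ⟨g, rfl⟩ := MulAction.exists_smul_eq G ((Q.2.map K.subtype).toSylow hQ) X
  obtain ⟨s, hs, l, hl, rfl⟩ := Set.mem_mul.mp (h.1 ▸ Set.mem_univ g)
  have hperm := h.2 p ((⟨l, hl⟩ : K) • Q)
  have hX (x : G) : x ∈ (s * l) • (Q.2.map K.subtype).toSylow hQ ↔
      s⁻¹ * x * s ∈ ((⟨l, hl⟩ : K) • Q).toSubgroup.map K.subtype := by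
    change x ∈ MulAut.conj (s * l) • Q.toSubgroup.map K.subtype ↔
      s⁻¹ * x * s ∈ (MulAut.conj (⟨l, hl⟩ : K) • Q.toSubgroup).map K.subtype
    rw [Subgroup.mem_pointwise_smul_iff_inv_smul_mem]
    constructor
    · rintro ⟨q, hq, h⟩
      refine ⟨MulAut.conj (⟨l, hl⟩ : K) • q, Subgroup.smul_mem_pointwise_smul _ _ _ hq, ?_⟩
      simp only [Subgroup.subtype_apply, ← map_inv, MulAut.smul_def, MulAut.conj_apply] at h
      simp [h, mul_assoc]
    · rintro ⟨_, ⟨q, hq, rfl⟩, h⟩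
      refine ⟨q, hq, ?_⟩
      have hx : x = s * (l * q * l⁻¹) * s⁻¹ := by
        rw [eq_mul_inv_iff_mul_eq, ← inv_mul_eq_iff_eq_mul, ← mul_assoc]
        simpa using h.symm
      simp [hx, ← map_inv, mul_assoc]
  refine Subgroup.mul_comm_of_mul_subset ?_
  rintro _ ⟨x, hx, a, ha, rfl⟩
  have hmem := Set.mul_mem_mul ((hX x).mp hx)
    (H.mul_mem (H.mul_mem (H.inv_mem hs) ha) hs : s⁻¹ * a * s ∈ H)
  rw [← hperm] at hmem
  obtain ⟨b, hb, y, hy, hby⟩ := hmem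
  refine ⟨s * b * s⁻¹, H.mul_mem (H.mul_mem hs hb) (H.inv_mem hs), s * y * s⁻¹,
    (hX _).mpr (by rwa [show s⁻¹ * (s * y * s⁻¹) * s = y by group]), ?_⟩
  simp only at hby ⊢
  calc s * b * s⁻¹ * (s * y * s⁻¹) = s * (b * y) * s⁻¹ := by group
    _ = x * a := by rw [hby]; group

/-- A Sylow subgroup `P` of the supplement lies in a Sylow subgroup of `G` contained in `HP`. -/
theorem IsSSSupplement.exists_sylow [Finite G] {H K P : Subgroup G} (h : IsSSSupplement H K)
    {p : ℕ} [Fact p.Prime] (hP : IsPGroup p P) (hPK : P ≤ K) (hp : ¬ p ∣ P.relIndex K) :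
    ∃ X : Sylow p G, P ≤ X ∧ (X : Set G) ⊆ (H : Set G) * (P : Set G) := by
  have hM := Subgroup.coe_sup_of_mul_comm (h.mul_comm_of_isPGroup hP hPK hp)
  obtain ⟨Q, hQ⟩ := (hP.comap_subtype (K := H ⊔ P)).exists_le_sylow
  have hMK : ((K : Set G) * ((H ⊔ P : Subgroup G) : Set G)) = Set.univ := by
    have : ((H ⊔ P : Subgroup G) : Set G) * (K : Set G) = Set.univ :=
      Set.univ_subset_iff.mp (h.1 ▸ Set.mul_subset_mul_right (le_sup_left (a := H)))
    simpa using congrArg (·⁻¹) this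
  have hindex : ¬ p ∣ (Q.toSubgroup.map (H ⊔ P).subtype).index := by
    rw [Subgroup.index_map_subtype, ← (Subgroup.mul_eq_univ_iff_relIndex_eq_index _ _).mp hMK]
    exact Nat.Prime.not_dvd_mul Fact.out Q.not_dvd_index fun hd =>
      hp (hd.trans (Subgroup.relIndex_dvd_of_le_left _ le_sup_right))
  refine ⟨(Q.2.map (H ⊔ P).subtype).toSylow hindex, fun x hx => ?_, ?_⟩
  · exact ⟨⟨x, le_sup_right (a := H) hx⟩, hQ hx, rfl⟩
  · rw [← hM]
    rintro _ ⟨x, -, rfl⟩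
    exact x.2

theorem IsSSSupplement.sup_mul_comm [Finite G] {T S K L P : Subgroup G}
    (hT : IsSSSupplement T K) (hS : IsSSSupplement S L)
    (hcop : Nat.Coprime (Nat.card T) (Nat.card S)) {p : ℕ} [Fact p.Prime]
    (hpS : ¬ p ∣ Nat.card S) (hP : IsPGroup p P) (hPKL : P ≤ K ⊓ L)
    (hp : ¬ p ∣ P.relIndex (K ⊓ L)) :
    ((T ⊔ S : Subgroup G) : Set G) * (P : Set G) =
      (P : Set G) * ((T ⊔ S : Subgroup G) : Set G) := by
  have hKL : L.relIndex K = L.index := by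
    have h := Subgroup.relIndex_inf_of_coprime ⊤ L K (by
      simpa using hcop.symm.of_dvd hS.index_dvd_card hT.index_dvd_card)
    rw [Subgroup.relIndex_top_right, Subgroup.relIndex_top_right, Subgroup.relIndex_top_right,
      ← Subgroup.relIndex_mul_index (inf_le_right : L ⊓ K ≤ K), Subgroup.inf_relIndex_right] at h
    exact Nat.eq_of_mul_eq_mul_right (Nat.pos_of_ne_zero Subgroup.index_ne_zero_of_finite) h
  have hPK : ¬ p ∣ P.relIndex K := by
    rw [← Subgroup.relIndex_mul_relIndex _ _ _ hPKL inf_le_left, Subgroup.inf_relIndex_left, hKL]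
    exact Nat.Prime.not_dvd_mul Fact.out hp fun hd => hpS (hd.trans hS.index_dvd_card)
  have hle := hPKL.trans inf_le_left
  obtain ⟨X, hPX, hXT⟩ := hT.exists_sylow hP hle hPK
  refine Subgroup.sup_mul_comm_of_subset ?_ ?_
  · rw [← hT.mul_comm_of_isPGroup hP hle hPK]
    exact Set.mul_subset_mul_right (le_sup_left (a := T))
  · rintro _ ⟨x, hx, a, ha, rfl⟩
    have hmem : x * a ∈ (X : Set G) * (S : Set G) := Set.mul_mem_mul (hPX hx) ha
    rw [← hS.mul_comm_sylow hpS X] at hmem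
    obtain ⟨b, hb, y, hy, hby⟩ := hmem
    obtain ⟨t, ht, z, hz, rfl⟩ := hXT hy
    exact ⟨b * t, mul_mem (Subgroup.mem_sup_right hb) (Subgroup.mem_sup_left ht), z, hz,
      (mul_assoc b t z).trans hby⟩

/-- The intersection of the supplements supplements the join. -/
theorem IsSSSupplement.sup_inf [Finite G] {T S K L : Subgroup G}
    (hT : IsSSSupplement T K) (hS : IsSSSupplement S L)
    (hcop : Nat.Coprime (Nat.card T) (Nat.card S)) : IsSSSupplement (T ⊔ S) (K ⊓ L) := by
  have hidx : Nat.Coprime K.index L.index := hcop.of_dvd hT.index_dvd_card hS.index_dvd_card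
  constructor
  · have hK : K.relIndex (T ⊔ S) = K.index :=
      (Subgroup.mul_eq_univ_iff_relIndex_eq_index _ _).mp
        (Set.univ_subset_iff.mp (hT.1 ▸ Set.mul_subset_mul_right (le_sup_left (a := T))))
    have hL : L.relIndex (T ⊔ S) = L.index :=
      (Subgroup.mul_eq_univ_iff_relIndex_eq_index _ _).mp
        (Set.univ_subset_iff.mp (hS.1 ▸ Set.mul_subset_mul_right (le_sup_right (a := T))))
    have h := Subgroup.relIndex_inf_of_coprime ⊤ K L (by simpa using hidx)
    rw [Subgroup.mul_eq_univ_iff_relIndex_eq_index,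
      Subgroup.relIndex_inf_of_coprime _ _ _ (by rwa [hK, hL]), hK, hL]
    simpa using h.symm
  · intro p _ P
    have hP := P.2.map (K ⊓ L).subtype
    have hle : P.toSubgroup.map (K ⊓ L).subtype ≤ K ⊓ L := Subgroup.map_subtype_le _
    have hp : ¬ p ∣ (P.toSubgroup.map (K ⊓ L).subtype).relIndex (K ⊓ L) := by
      rw [Subgroup.relIndex, Subgroup.subgroupOf, Subgroup.comap_map_eq_self_of_injective
        (Subgroup.subtype_injective _)]
      exact P.not_dvd_index
    by_cases hpS : p ∣ Nat.card S
    · have hpT : ¬ p ∣ Nat.card T := fun hpT =>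
        Nat.Prime.not_coprime_iff_dvd.mpr ⟨p, Fact.out, hpT, hpS⟩ hcop
      rw [sup_comm]
      refine hS.sup_mul_comm hT hcop.symm hpT hP (hle.trans (inf_comm K L).le) ?_
      rwa [inf_comm L K]
    · exact hT.sup_mul_comm hS hcop hpS hP hle hp

end

/-- Lemma 2.6. -/
theorem join_isSSPermutable_of_coprime {G : Type*} [Group G] [Finite G] :
    (IsSolvable G → ∀ T S : Subgroup G, Nat.Coprime (Nat.card T) (Nat.card S) →
      (IsSSPermutable T → IsSSPermutable S → IsSSPermutable (T ⊔ S)) ∧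
      (IsNSSPermutable T → IsNSSPermutable S → IsNSSPermutable (T ⊔ S))) ∧
    (∀ T S : Subgroup G, (∃ p k : ℕ, p.Prime ∧ Nat.card T = p ^ k) →
      (∃ q m : ℕ, q.Prime ∧ Nat.card S = q ^ m) →
      Nat.Coprime (Nat.card T) (Nat.card S) →
      (IsSSPermutable T → IsSSPermutable S → IsSSPermutable (T ⊔ S)) ∧
      (IsNSSPermutable T → IsNSSPermutable S → IsNSSPermutable (T ⊔ S))) := by
  have main (T S : Subgroup G) (hcop : Nat.Coprime (Nat.card T) (Nat.card S)) :
      (IsSSPermutable T → IsSSPermutable S → IsSSPermutable (T ⊔ S)) ∧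
      (IsNSSPermutable T → IsNSSPermutable S → IsNSSPermutable (T ⊔ S)) := by
    constructor
    · rintro ⟨K, hK⟩ ⟨L, hL⟩
      exact ⟨K ⊓ L, hK.sup_inf hL hcop⟩
    · rintro ⟨K, hKn, hK⟩ ⟨L, hLn, hL⟩
      exact ⟨K ⊓ L, inferInstance, hK.sup_inf hL hcop⟩
  exact ⟨fun _ => main, fun T S _ _ => main T S⟩
end

section
/- Let G be a finite solvable PST-group with nilpotent residual L, and let D be a complement of L in G (a system normalizer of G). Then: (1) the derived subgroup D' is normal in G; (2) if H is an SS-permutable p-subgroup of G with SS-permutable supplement K, where p is a prime dividing |G|, then [H, K_p] ≤ O_p(G) for every Sylow p-subgroup K_p of K. -/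
open scoped Pointwise

/-- `L` is the nilpotent residual of `G`: the smallest normal subgroup of `G`
with nilpotent quotient. -/
def IsNilpotentResidual {G : Type*} [Group G] (L : Subgroup G) : Prop :=
  L.Normal ∧ ∀ [L.Normal], Group.IsNilpotent (G ⧸ L) ∧
    ∀ (N : Subgroup G) [N.Normal], Group.IsNilpotent (G ⧸ N) → L ≤ N

/-- `O_p(G)`, the largest normal `p`-subgroup of `G` (as the join of all
normal `p`-subgroups). -/
def pCore (p : ℕ) (G : Type*) [Group G] : Subgroup G :=
  sSup {N : Subgroup G | N.Normal ∧ IsPGroup p N}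

section Elementary

variable {G : Type*} [Group G]

open Subgroup
open scoped commutatorElement

theorem eq_one_of_pow_eq_one_of_zpow_eq_one {c : G} {p : ℕ} (hp : p.Prime) {k : ℤ}
    (hk : ¬ (p : ℤ) ∣ k) (hcp : c ^ p = 1) (hck : c ^ k = 1) : c = 1 := by
  have hc : IsCoprime (p : ℤ) k := (Nat.prime_iff_prime_int.mp hp).coprime_iff_not_dvd.mpr hk
  obtain ⟨u, w, huw⟩ := hc
  calc c = c ^ (u * p + w * k) := by rw [huw, zpow_one]
    _ = 1 := by
      rw [zpow_add, mul_comm u, mul_comm w, zpow_mul, zpow_mul, zpow_natCast, hcp, hck]; simp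

theorem mem_of_pow_mem_of_pow_mem (N : Subgroup G) {y : G} {m n : ℕ} (h : m.Coprime n)
    (hm : y ^ m ∈ N) (hn : y ^ n ∈ N) : y ∈ N := by
  have hc : IsCoprime (m : ℤ) n := Nat.isCoprime_iff_coprime.mpr h
  obtain ⟨u, w, huw⟩ := hc
  have : y = (y ^ m) ^ u * (y ^ n) ^ w := by
    rw [← zpow_natCast, ← zpow_natCast, ← zpow_mul, ← zpow_mul, ← zpow_add, mul_comm _ u,
      mul_comm _ w, huw, zpow_one]
  rw [this]
  exact N.mul_mem (N.zpow_mem hm u) (N.zpow_mem hn w)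

/-- Automorphisms of a cyclic group commute. -/
theorem commute_commutatorElement_of_mem_normalizer {a b v : G}
    (ha : a ∈ normalizer (zpowers v : Set G)) (hb : b ∈ normalizer (zpowers v : Set G)) :
    Commute ⁅a, b⁆ v := by
  obtain ⟨i, hi⟩ := mem_zpowers_iff.mp
    ((mem_normalizer_iff.mp (inv_mem ha) v).mp (mem_zpowers v))
  obtain ⟨j, hj⟩ := mem_zpowers_iff.mp
    ((mem_normalizer_iff.mp (inv_mem hb) v).mp (mem_zpowers v))
  have hab : a⁻¹ * (b⁻¹ * v * b⁻¹⁻¹) * a⁻¹⁻¹ = b⁻¹ * (a⁻¹ * v * a⁻¹⁻¹) * b⁻¹⁻¹ := by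
    rw [← hi, ← hj, ← conj_zpow, ← conj_zpow, ← hi, ← hj, ← zpow_mul, ← zpow_mul, mul_comm]
  calc ⁅a, b⁆ * v = a * b * (a⁻¹ * (b⁻¹ * v * b⁻¹⁻¹) * a⁻¹⁻¹) * a⁻¹ * b⁻¹ := by
        rw [commutatorElement_def]; group
    _ = v * ⁅a, b⁆ := by rw [hab, commutatorElement_def]; group

/-- If `x` commutes with `x⁻¹xᵍ`, and both have coprime exponents, then `x` commutes with `g`. -/
theorem inv_mul_conj_eq_one {x g : G} {m n : ℕ} (hmn : n.Coprime m)
    (hc : Commute x (x⁻¹ * (g * x * g⁻¹))) (hx : x ^ n = 1)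
    (hy : (x⁻¹ * (g * x * g⁻¹)) ^ m = 1) : x⁻¹ * (g * x * g⁻¹) = 1 := by
  have h1 : (x⁻¹ * (g * x * g⁻¹)) ^ n = 1 := by
    have h2 := hc.mul_pow n
    rw [mul_inv_cancel_left, hx, one_mul, conj_pow, hx, mul_one, mul_inv_cancel] at h2
    exact h2.symm
  have := mem_of_pow_mem_of_pow_mem (⊥ : Subgroup G) hmn (mem_bot.mpr h1) (mem_bot.mpr hy)
  exact mem_bot.mp this

/-- An element of order prime to `p` inducing on a cyclic `p`-group a power map with exponent
congruent to `1` modulo `p` centralizes it. -/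
theorem commute_of_conj_eq_zpow {x z : G} {p n a : ℕ} {m : ℤ} (hn : n.Coprime p)
    (hx : x ^ n = 1) (hz : z ^ p ^ a = 1) (h : x * z * x⁻¹ = z ^ m) (hm : (p : ℤ) ∣ m - 1) :
    Commute x z := by
  have hpow : ∀ j : ℕ, x ^ j * z * (x ^ j)⁻¹ = z ^ (m ^ j) := by
    intro j
    induction j with
    | zero => simp
    | succ j ih =>
      rw [show x ^ (j + 1) * z * (x ^ (j + 1))⁻¹ = x * (x ^ j * z * (x ^ j)⁻¹) * x⁻¹ by
        rw [pow_succ']; group, ih, ← conj_zpow, h, ← zpow_mul, pow_succ']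
  have hd : ((p ^ a : ℕ) : ℤ) ∣ m ^ p ^ a - 1 := by
    have := dvd_sub_pow_of_dvd_sub (R := ℤ) (a := m) (b := 1) hm a
    rw [one_pow] at this
    refine dvd_trans ?_ this
    push_cast
    exact pow_dvd_pow _ (Nat.le_succ a)
  have hfix : x ^ p ^ a * z * (x ^ p ^ a)⁻¹ = z := by
    rw [hpow]
    obtain ⟨t, ht⟩ := hd
    rw [show m ^ p ^ a = (p ^ a : ℕ) * t + 1 by linarith, zpow_add, zpow_mul, zpow_natCast, hz]
    simp
  have hmem : x ^ p ^ a ∈ centralizer ({z} : Set G) :=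
    mem_centralizer_singleton_iff.mpr (mul_inv_eq_iff_eq_mul.mp hfix)
  have := mem_of_pow_mem_of_pow_mem (centralizer ({z} : Set G)) (hn.pow_right a)
    (by rw [hx]; exact one_mem _) hmem
  exact mem_centralizer_singleton_iff.mp this

end Elementary

section CoprimePowerAction

variable {G : Type*} [Group G]

open Subgroup
open scoped commutatorElement

theorem exists_pow_pow_eq_one_of_mem {P : Subgroup G} {p : ℕ} (hP : IsPGroup p P)
    {v : G} (hv : v ∈ P) : ∃ k, v ^ p ^ k = 1 := by
  obtain ⟨k, hk⟩ := isPGroup_iff_pow_pow_eq_one.mp hP ⟨v, hv⟩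
  exact ⟨k, by simpa [Subtype.ext_iff] using hk⟩

variable {P : Subgroup G} [P.Normal] {p n : ℕ} {x : G}

theorem inv_mul_conj_mem (x : G) {g : G} (hg : g ∈ P) : x⁻¹ * (g * x * g⁻¹) ∈ P := by
  have h1 : x⁻¹ * g * x⁻¹⁻¹ ∈ P := Normal.conj_mem ‹_› g hg x⁻¹
  have := P.mul_mem h1 (P.inv_mem hg)
  rwa [inv_inv, mul_assoc, mul_assoc, ← mul_assoc g] at this

/-- A `p`-regular element all of whose conjugates normalize every cyclic subgroup of a normal
`p`-subgroup `P` acts trivially on `P` modulo its center. -/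
theorem inv_mul_conj_mem_centralizer (hP : IsPGroup p P) (hn : n.Coprime p) (hx : x ^ n = 1)
    (hnorm : ∀ g : G, ∀ v ∈ P, g * x * g⁻¹ ∈ normalizer (zpowers v : Set G))
    {g : G} (hg : g ∈ P) : x⁻¹ * (g * x * g⁻¹) ∈ centralizer (P : Set G) := by
  have hxn : ∀ v ∈ P, x ∈ normalizer (zpowers v : Set G) := fun v hv => by
    simpa using hnorm 1 v hv
  have hcomm : ⁅x, x⁻¹ * (g * x * g⁻¹)⁆ ∈ centralizer (P : Set G) :=
    mem_centralizer_iff.mpr fun v hv => (commute_commutatorElement_of_mem_normalizer (hxn v hv)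
      (mul_mem (inv_mem (hxn v hv)) (hnorm g v hv))).eq.symm
  obtain ⟨k, hk⟩ := exists_pow_pow_eq_one_of_mem hP (inv_mul_conj_mem x hg)
  rw [← QuotientGroup.eq_one_iff] at hcomm ⊢
  refine inv_mul_conj_eq_one (x := (x : G ⧸ centralizer (P : Set G))) (g := g)
    (m := p ^ k) (n := n) (hn.pow_right k) ?_ ?_ ?_
  · exact commutatorElement_eq_one_iff_commute.mp hcomm
  · exact congrArg (QuotientGroup.mk' (centralizer (P : Set G))) hx
  · exact congrArg (QuotientGroup.mk' (centralizer (P : Set G))) hk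

/-- A `p`-regular element acting nontrivially on a normal `p`-subgroup `P`, all of whose conjugates
normalize every cyclic subgroup of `P`, has no nontrivial fixed points in `P`. -/
theorem eq_one_of_commute (hp : p.Prime) (hP : IsPGroup p P) (hn : n.Coprime p) (hx : x ^ n = 1)
    (hnorm : ∀ g : G, ∀ v ∈ P, g * x * g⁻¹ ∈ normalizer (zpowers v : Set G))
    (hne : x ∉ centralizer (P : Set G)) {c : G} (hc : c ∈ P) (hxc : Commute x c) : c = 1 := by
  have hxn : ∀ v ∈ P, x ∈ normalizer (zpowers v : Set G) := fun v hv => by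
    simpa using hnorm 1 v hv
  obtain ⟨g, hg, hgx⟩ : ∃ g ∈ P, ¬ g * x = x * g := by
    simpa [mem_centralizer_iff] using hne
  have hzP := inv_mul_conj_mem x hg
  have hzC := inv_mul_conj_mem_centralizer hP hn hx hnorm hg
  have hz : ¬ Commute x (x⁻¹ * (g * x * g⁻¹)) := by
    intro h
    obtain ⟨k, hk⟩ := exists_pow_pow_eq_one_of_mem hP hzP
    have := inv_mul_conj_eq_one (hn.pow_right k) h hx hk
    rw [inv_mul_eq_one, eq_mul_inv_iff_mul_eq] at this
    exact hgx this.symm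
  generalize x⁻¹ * (g * x * g⁻¹) = z at hzP hzC hz
  obtain ⟨a, ha⟩ := exists_pow_pow_eq_one_of_mem hP hzP
  -- no nontrivial fixed point has order dividing `p`
  have main : ∀ d ∈ P, d ^ p = 1 → Commute x d → d = 1 := by
    intro d hd hdp hxd
    by_contra hd1
    have hcz : Commute z d := (mem_centralizer_iff.mp hzC d hd).symm
    obtain ⟨k, hk⟩ := mem_zpowers_iff.mp ((mem_normalizer_iff.mp (hxn z hzP) z).mp (mem_zpowers z))
    obtain ⟨m, hm⟩ := mem_zpowers_iff.mp
      ((mem_normalizer_iff.mp (hxn _ (mul_mem hzP hd)) (z * d)).mp (mem_zpowers _))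
    have hxd' : x * d * x⁻¹ = d := by rw [hxd.eq, mul_inv_cancel_right]
    have heq : z ^ m * d ^ m = z ^ k * d := by
      rw [← hcz.mul_zpow, hm, hk]
      conv_rhs => rw [← hxd']
      group
    by_cases hpm : (p : ℤ) ∣ m - 1
    · refine hz (commute_of_conj_eq_zpow hn hx ha (m := m) ?_ hpm)
      obtain ⟨t, ht⟩ := hpm
      have hdm : d ^ m = d := by
        rw [show m = p * t + 1 by linarith, zpow_add, zpow_mul, zpow_natCast, hdp]; simp
      rw [hdm] at heq
      rw [← hk, mul_right_cancel heq]
    · have hdz : d ∈ zpowers z := by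
        have h1 : d ^ (m - 1) ∈ zpowers z := by
          have : d ^ (m - 1) = z ^ (-m) * z ^ k := by
            rw [zpow_sub_one, zpow_neg, eq_inv_mul_iff_mul_eq, ← mul_assoc, heq,
              mul_inv_cancel_right]
          rw [this]
          exact mul_mem (zpow_mem (mem_zpowers z) _) (zpow_mem (mem_zpowers z) _)
        obtain ⟨u, w, huw⟩ : IsCoprime (p : ℤ) (m - 1) :=
          (Nat.prime_iff_prime_int.mp hp).coprime_iff_not_dvd.mpr hpm
        have h2 : d = (d ^ (m - 1)) ^ w := by
          conv_lhs => rw [← zpow_one d, ← huw, zpow_add, mul_comm u, zpow_mul, zpow_natCast, hdp,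
            one_zpow, one_mul, mul_comm w, zpow_mul]
        rw [h2]
        exact zpow_mem h1 w
      obtain ⟨t, rfl⟩ := mem_zpowers_iff.mp hdz
      by_cases hpk : (p : ℤ) ∣ k - 1
      · exact hz (commute_of_conj_eq_zpow hn hx ha hk.symm hpk)
      · refine hd1 (eq_one_of_pow_eq_one_of_zpow_eq_one hp hpk hdp ?_)
        rw [← conj_zpow, ← hk, ← zpow_mul] at hxd'
        rw [← zpow_mul, mul_sub_one, zpow_sub, mul_comm t, hxd', mul_inv_cancel]
  obtain ⟨k, hk⟩ := exists_pow_pow_eq_one_of_mem hP hc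
  induction k with
  | zero => simpa using hk
  | succ k ih =>
    refine ih (main _ (pow_mem hc _) ?_ (hxc.pow_right _))
    rw [← pow_mul, ← pow_succ, hk]

/-- A normal `p`-subgroup on which some `p`-regular element acts nontrivially, all of whose conjugates
normalize every cyclic subgroup, is abelian. -/
theorem le_centralizer_self_of_mem_normalizer [Finite G] (hp : p.Prime) (hP : IsPGroup p P)
    (hn : n.Coprime p) (hx : x ^ n = 1)
    (hnorm : ∀ g : G, ∀ v ∈ P, g * x * g⁻¹ ∈ normalizer (zpowers v : Set G))
    (hne : x ∉ centralizer (P : Set G)) : P ≤ centralizer (P : Set G) := by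
  let f : P → P := fun g => ⟨x⁻¹ * (g * x * (g : G)⁻¹), inv_mul_conj_mem x g.2⟩
  have hf : Function.Injective f := by
    rintro ⟨g, hg⟩ ⟨h, hh⟩ hgh
    have h1 : g * x * g⁻¹ = h * x * h⁻¹ := mul_left_cancel (Subtype.ext_iff.mp hgh)
    have h2 : Commute x (h⁻¹ * g) := by
      calc x * (h⁻¹ * g) = h⁻¹ * (h * x * h⁻¹) * g := by group
        _ = h⁻¹ * (g * x * g⁻¹) * g := by rw [h1]
        _ = h⁻¹ * g * x := by group
    have h3 := eq_one_of_commute hp hP hn hx hnorm hne (mul_mem (inv_mem hh) hg) h2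
    exact Subtype.ext (inv_mul_eq_one.mp h3).symm
  intro a ha
  obtain ⟨g, hg⟩ := Finite.surjective_of_injective hf ⟨a, ha⟩
  have : x⁻¹ * (g * x * (g : G)⁻¹) = a := Subtype.ext_iff.mp hg
  rw [← this]
  exact inv_mul_conj_mem_centralizer hP hn hx hnorm g.2

end CoprimePowerAction

section Sections

variable {G : Type*} [Group G]

open Subgroup
open scoped commutatorElement

/-- For all primes `p ≠ q`, the Sylow `q`-subgroups of `G` normalize every subgroup lying in a
normal `p`-section of `G`. -/
def SylowNormalizesSections (G : Type*) [Group G] : Prop :=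
  ∀ (p q : ℕ) [Fact p.Prime] [Fact q.Prime], p ≠ q → ∀ N X M : Subgroup G, N.Normal → M.Normal →
    N ≤ X → X ≤ M → (∀ m ∈ M, ∃ k, m ^ p ^ k ∈ N) →
      ∀ Q : Sylow q G, (Q : Subgroup G) ≤ normalizer (X : Set G)

theorem le_normalizer_of_conj_mem {Q X : Subgroup G} (h : ∀ g ∈ Q, ∀ x ∈ X, g * x * g⁻¹ ∈ X) :
    Q ≤ normalizer (X : Set G) := by
  intro g hg
  refine mem_normalizer_iff.mpr fun x => ⟨h g hg x, fun hx => ?_⟩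
  have := h g⁻¹ (inv_mem hg) _ hx
  simpa [mul_assoc] using this

theorem eq_top_of_forall_sylow_le [Finite G] {S : Subgroup G}
    (h : ∀ (q : ℕ) [Fact q.Prime], ∃ Q : Sylow q G, (Q : Subgroup G) ≤ S) : S = ⊤ := by
  rw [← index_eq_one]
  by_contra hne
  obtain ⟨q, hq, hd⟩ := Nat.exists_prime_and_dvd hne
  have : Fact q.Prime := ⟨hq⟩
  obtain ⟨Q, hQ⟩ := h q
  exact Q.not_dvd_index (hd.trans (index_dvd_of_le hQ))

theorem isSPermutable_of_normal (M : Subgroup G) [M.Normal] : IsSPermutable M :=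
  fun _ _ P => (set_mul_normal_comm (P : Set G) M).symm

theorem mem_of_pow_mem_of_isPGroup {Q N : Subgroup G} {p q k : ℕ} [hp : Fact p.Prime]
    [hq : Fact q.Prime] (hpq : p ≠ q) (hQ : IsPGroup q Q) {y : G} (hy : y ∈ Q)
    (hyN : y ^ p ^ k ∈ N) : y ∈ N := by
  obtain ⟨j, hj⟩ := exists_pow_pow_eq_one_of_mem hQ hy
  exact mem_of_pow_mem_of_pow_mem N (m := p ^ k) (n := q ^ j)
    (((Nat.coprime_primes hp.out hq.out).mpr hpq).pow k j) hyN (hj ▸ one_mem N)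

/-- A subgroup containing a normal subgroup with `p`-power quotient is S-permutable. -/
theorem isSPermutable_of_isPGroup_quotient [Finite G] {p : ℕ} [Fact p.Prime] {N X : Subgroup G}
    [N.Normal] (hNX : N ≤ X) (hpow : ∀ m : G, ∃ k, m ^ p ^ k ∈ N) : IsSPermutable X := by
  intro r hr R
  by_cases hpr : p = r
  · subst hpr
    have hidx : N ⊔ R = ⊤ := by
      refine eq_top_of_forall_sylow_le fun q hq => ?_
      by_cases hpq : p = q
      · subst hpq; exact ⟨R, le_sup_right⟩
      · obtain ⟨Q⟩ : Nonempty (Sylow q G) := inferInstance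
        refine ⟨Q, fun y hy => mem_sup_left ?_⟩
        obtain ⟨k, hk⟩ := hpow y
        exact mem_of_pow_mem_of_isPGroup hpq Q.2 hy hk
    have h1 : (N : Set G) * (R : Set G) = Set.univ := by
      have := normal_mul N (R : Subgroup G)
      rw [hidx] at this
      simpa using this.symm
    have h2 : (R : Set G) * (N : Set G) = Set.univ := by
      rw [set_mul_normal_comm, h1]
    have h3 : (X : Set G) * (R : Set G) = Set.univ :=
      Set.univ_subset_iff.mp (h1 ▸ Set.mul_subset_mul_right hNX)
    have h4 : (R : Set G) * (X : Set G) = Set.univ :=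
      Set.univ_subset_iff.mp (h2 ▸ Set.mul_subset_mul_left hNX)
    exact h3.trans h4.symm
  · have hR : (R : Subgroup G) ≤ X := fun y hy => by
      obtain ⟨k, hk⟩ := hpow y
      exact hNX (mem_of_pow_mem_of_isPGroup hpr R.2 hy hk)
    ext g
    simp only [Set.mem_mul, SetLike.mem_coe]
    constructor
    · rintro ⟨x, hx, y, hy, rfl⟩
      exact ⟨1, one_mem _, x * y, mul_mem hx (hR hy), one_mul _⟩
    · rintro ⟨y, hy, x, hx, rfl⟩
      exact ⟨y * x, mul_mem (hR hy) hx, 1, one_mem _, mul_one _⟩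

theorem IsPSTGroup.sylowNormalizesSections [Finite G] (hG : IsPSTGroup G) :
    SylowNormalizesSections G := by
  intro p q _ _ hpq N X M hN hM hNX hXM hpow Q
  have hXp : IsSPermutable X := by
    refine hG X M hXM ?_ (isSPermutable_of_normal M)
    refine isSPermutable_of_isPGroup_quotient (p := p) (N := N.subgroupOf M)
      (subgroupOf_mono M hNX) fun m => ?_
    obtain ⟨k, hk⟩ := hpow m m.2
    exact ⟨k, mem_subgroupOf.mpr hk⟩
  have hperm := hXp q Q
  refine le_normalizer_of_conj_mem fun g hg x hx => ?_
  have hmem : g * x ∈ (X : Set G) * (Q : Set G) := by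
    rw [show (X : Set G) * (Q : Set G) = _ from hperm]
    exact Set.mul_mem_mul hg hx
  obtain ⟨x', hx', g', hg', h⟩ := Set.mem_mul.mp hmem
  have hquot : g' * g⁻¹ ∈ X := by
    have hQ : g' * g⁻¹ ∈ (Q : Subgroup G) := mul_mem hg' (inv_mem hg)
    have hM' : g' * g⁻¹ ∈ M := by
      have : g' * g⁻¹ = x'⁻¹ * (g * x * g⁻¹) := by rw [← h]; group
      rw [this]
      exact mul_mem (inv_mem (hXM hx')) (hM.conj_mem x (hXM hx) g)
    obtain ⟨k, hk⟩ := hpow _ hM'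
    exact hNX (mem_of_pow_mem_of_isPGroup hpq Q.2 hQ hk)
  have : g * x * g⁻¹ = x' * (g' * g⁻¹) := by rw [← h]; group
  rw [this]
  exact mul_mem hx' hquot

theorem SylowNormalizesSections.quotient [Finite G] (hG : SylowNormalizesSections G)
    (C : Subgroup G) [C.Normal] : SylowNormalizesSections (G ⧸ C) := by
  intro p q _ _ hpq N X M hN hM hNX hXM hpow Q
  have hsurj := QuotientGroup.mk'_surjective C
  obtain ⟨Q, rfl⟩ := Sylow.mapSurjective_surjective hsurj q Q
  have := hG p q hpq (N.comap (QuotientGroup.mk' C)) (X.comap (QuotientGroup.mk' C))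
    (M.comap (QuotientGroup.mk' C)) inferInstance inferInstance (comap_mono hNX) (comap_mono hXM)
    (fun m hm => by
      obtain ⟨k, hk⟩ := hpow _ hm
      exact ⟨k, by simpa using hk⟩) Q
  refine le_normalizer_of_conj_mem ?_
  rintro _ ⟨g, hg, rfl⟩ x hx
  obtain ⟨x, rfl⟩ := hsurj x
  have := (mem_normalizer_iff.mp (this hg) x).mp hx
  simpa using this

theorem SylowNormalizesSections.sylow_le_normalizer (hG : SylowNormalizesSections G) {p q : ℕ}
    [Fact p.Prime] [Fact q.Prime] (hpq : p ≠ q) {X M : Subgroup G} [M.Normal] (hM : IsPGroup p M)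
    (hXM : X ≤ M) (Q : Sylow q G) : (Q : Subgroup G) ≤ normalizer (X : Set G) :=
  hG p q hpq ⊥ X M inferInstance ‹_› bot_le hXM
    (fun _ hm => exists_pow_pow_eq_one_of_mem hM hm) Q

/-- A subgroup of a normal `p`-subgroup which is normalized by a Sylow `p`-subgroup is normal. -/
theorem SylowNormalizesSections.normal_of_sylow_le [Finite G] (hG : SylowNormalizesSections G)
    {p : ℕ} [Fact p.Prime] {X M : Subgroup G} [M.Normal] (hM : IsPGroup p M) (hXM : X ≤ M)
    (P : Sylow p G) (hP : (P : Subgroup G) ≤ normalizer (X : Set G)) : X.Normal := by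
  rw [← normalizer_eq_top_iff]
  refine eq_top_of_forall_sylow_le fun q _ => ?_
  by_cases hpq : p = q
  · subst hpq; exact ⟨P, hP⟩
  · obtain ⟨Q⟩ : Nonempty (Sylow q G) := inferInstance
    exact ⟨Q, hG.sylow_le_normalizer hpq hM hXM Q⟩

theorem commutator_le_centralizer_of_forall_normal {X : Subgroup G}
    (h : ∀ v ∈ X, (zpowers v).Normal) : commutator G ≤ centralizer (X : Set G) := by
  rw [commutator_def, commutator_le]
  intro a _ b _
  refine mem_centralizer_iff.mpr fun v hv => ?_
  have := normalizer_eq_top_iff.mpr (h v hv)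
  exact (commute_commutatorElement_of_mem_normalizer (this ▸ mem_top a)
    (this ▸ mem_top b)).eq.symm

end Sections

section Residual

open Subgroup
open scoped commutatorElement

/-- The Sylow subgroups of a nilpotent normal subgroup are normal in the whole group. -/
theorem normal_map_subtype_sylow {G : Type*} [Group G] [Finite G] {A : Subgroup G} [A.Normal]
    [Group.IsNilpotent A] {p : ℕ} [Fact p.Prime] (S : Sylow p A) :
    (S.toSubgroup.map A.subtype).Normal :=
  have : S.toSubgroup.Characteristic := S.characteristic_of_normal inferInstance
  inferInstance

theorem map_subtype_sylow_ne_bot {G : Type*} [Group G] [Finite G] {A : Subgroup G} {p : ℕ}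
    [Fact p.Prime] (hp : p ∣ Nat.card A) (S : Sylow p A) : S.toSubgroup.map A.subtype ≠ ⊥ := by
  rw [Ne, map_eq_bot_iff_of_injective _ A.subtype_injective]
  exact S.ne_bot_of_dvd_card hp

theorem exists_normal_isPGroup_ne_bot {G : Type*} [Group G] [Finite G] [Nontrivial G]
    (hsol : Group.IsSolvable G) :
    ∃ (p : ℕ) (_ : Fact p.Prime) (M : Subgroup G), M.Normal ∧ IsPGroup p M ∧ M ≠ ⊥ := by
  classical
  have hex : ∃ n, derivedSeries G n = ⊥ := hsol.solvable
  obtain ⟨n, hn⟩ : ∃ n, Nat.find hex = n + 1 := by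
    refine Nat.exists_eq_succ_of_ne_zero fun h => ?_
    have := Nat.find_spec hex
    rw [h, derivedSeries_zero] at this
    exact top_ne_bot this
  have hA : derivedSeries G n ≠ ⊥ := Nat.find_min hex (by omega)
  have hcomm : ⁅derivedSeries G n, derivedSeries G n⁆ = ⊥ := by
    have := Nat.find_spec hex
    rwa [hn, derivedSeries_succ] at this
  have hnil : Group.IsNilpotent (derivedSeries G n) :=
    isNilpotent_of_lowerCentralSeries_eq_bot (n := 1) hcomm
  obtain ⟨p, hp, hd⟩ := Nat.exists_prime_and_dvd (mt card_eq_one.mp hA)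
  have hfact : Fact p.Prime := ⟨hp⟩
  obtain ⟨S⟩ : Nonempty (Sylow p (derivedSeries G n)) := inferInstance
  exact ⟨p, hfact, _, normal_map_subtype_sylow S, S.2.map _, map_subtype_sylow_ne_bot hd S⟩

/-- A nontrivial normal `p`-subgroup has nontrivial elements centralized by a given
Sylow `p`-subgroup. -/
theorem inf_centralizer_sylow_ne_bot {G : Type*} [Group G] [Finite G] {p : ℕ} [Fact p.Prime]
    {M : Subgroup G} [M.Normal] (hM : IsPGroup p M) (hne : M ≠ ⊥) (P : Sylow p G) :
    M ⊓ centralizer (P : Set G) ≠ ⊥ := by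
  let _ : MulAction P M :=
    MulAction.compHom M ((MulAut.conjNormal : G →* MulAut M).comp P.toSubgroup.subtype)
  have hsmul : ∀ (g : P) (m : M), ((g • m : M) : G) = g * m * (g : G)⁻¹ := fun g m =>
    MulAut.conjNormal_apply (g : G) m
  have hdvd : p ∣ Nat.card M := hM.card_eq_or_dvd.resolve_left (mt card_eq_one.mp hne)
  obtain ⟨b, hb, hb1⟩ := P.2.exists_fixed_point_of_prime_dvd_card_of_fixed_point M hdvd
    (a := (1 : M)) fun g => Subtype.ext (by rw [hsmul]; simp)
  intro hbot
  have hmem : (b : G) ∈ M ⊓ centralizer (P : Set G) := by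
    refine ⟨b.2, mem_centralizer_iff.mpr fun g hg => ?_⟩
    have := Subtype.ext_iff.mp (hb ⟨g, hg⟩)
    rw [hsmul] at this
    exact mul_inv_eq_iff_eq_mul.mp this
  rw [hbot, mem_bot] at hmem
  exact hb1 (Subtype.ext hmem.symm)

theorem map_mk_commutator {G : Type*} [Group G] (C : Subgroup G) [C.Normal] :
    (commutator G).map (QuotientGroup.mk' C) = commutator (G ⧸ C) := by
  rw [commutator_def, commutator_def, map_commutator,
    map_top_of_surjective _ (QuotientGroup.mk'_surjective C)]

theorem card_quotient_lt {G : Type*} [Group G] [Finite G] {C : Subgroup G} (hC : C ≠ ⊥) :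
    Nat.card (G ⧸ C) < Nat.card G := by
  rw [← C.card_mul_index, ← index_eq_card]
  exact lt_mul_of_one_lt_left (Nat.pos_of_ne_zero index_ne_zero_of_finite)
    (C.one_lt_card_iff_ne_bot.mpr hC)

theorem isNilpotent_commutator {G : Type*} [Group G] [Finite G] (hsol : Group.IsSolvable G)
    (hG : SylowNormalizesSections G) : Group.IsNilpotent (commutator G) := by
  induction hn : Nat.card G using Nat.strong_induction_on generalizing G with
  | _ n ih =>
  subst hn
  rcases subsingleton_or_nontrivial G with hs | hnt
  · infer_instance
  obtain ⟨p, _, M, hMn, hM, hMne⟩ := exists_normal_isPGroup_ne_bot hsol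
  obtain ⟨P⟩ : Nonempty (Sylow p G) := inferInstance
  have hnormal : ∀ X ≤ M ⊓ centralizer (P : Set G), X.Normal := fun X hX =>
    hG.normal_of_sylow_le hM (hX.trans inf_le_left) P <|
      (le_centralizer_iff.mp (hX.trans inf_le_right)).trans (centralizer_le_normalizer _)
  have hne := inf_centralizer_sylow_ne_bot hM hMne P
  generalize M ⊓ centralizer (P : Set G) = C at hnormal hne
  have hCn : C.Normal := hnormal C le_rfl
  have hcent : commutator G ≤ centralizer (C : Set G) :=
    commutator_le_centralizer_of_forall_normal fun v hv =>
      hnormal _ (zpowers_le.mpr hv)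
  have hquot : Group.IsNilpotent (commutator (G ⧸ C)) :=
    ih _ (card_quotient_lt hne) inferInstance (hG.quotient C) rfl
  let f : commutator G →* commutator (G ⧸ C) :=
    ((QuotientGroup.mk' C).comp (commutator G).subtype).codRestrict _ fun g =>
      map_mk_commutator C ▸ mem_map_of_mem _ g.2
  refine Subgroup.isNilpotent_of_ker_le_center f fun g hg => ?_
  have hgC : (g : G) ∈ C := (QuotientGroup.eq_one_iff _).mp (Subtype.ext_iff.mp hg)
  exact mem_center_iff.mpr fun h =>
    Subtype.ext (mem_centralizer_iff.mp (hcent h.2) g hgC).symm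

/-- The case where the derived subgroup is a `p`-group. -/
theorem commutator_le_centralizer_of_isPGroup {G : Type*} [Group G] [Finite G]
    (hG : SylowNormalizesSections G) {p : ℕ} [hp : Fact p.Prime] (hcomm : IsPGroup p (commutator G))
    {L : Subgroup G} (hL : ⁅L, (⊤ : Subgroup G)⁆ = L) :
    commutator G ≤ centralizer (L : Set G) := by
  obtain ⟨P⟩ : Nonempty (Sylow p G) := inferInstance
  have hcP : commutator G ≤ P := hcomm.le_sylow_of_normal P
  have hLP : L ≤ P := by
    rw [← hL]
    exact (commutator_mono le_top le_rfl).trans hcP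
  have hPn : P.toSubgroup.Normal := ⟨fun a ha g => by
    have : g * a * g⁻¹ = ⁅g, a⁆ * a := by rw [commutatorElement_def]; group
    rw [this]
    exact mul_mem (hcP (commutator_mem_commutator (mem_top g) (mem_top a))) ha⟩
  by_cases h : ∀ (q : ℕ) [Fact q.Prime], p ≠ q → ∀ Q : Sylow q G,
      (Q : Subgroup G) ≤ centralizer (P : Set G)
  · have htop : (P : Subgroup G) ⊔ centralizer (L : Set G) = ⊤ := by
      refine eq_top_of_forall_sylow_le fun q _ => ?_
      by_cases hpq : p = q
      · subst hpq; exact ⟨P, le_sup_left⟩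
      · obtain ⟨Q⟩ : Nonempty (Sylow q G) := inferInstance
        exact ⟨Q, ((h q hpq Q).trans (centralizer_le hLP)).trans le_sup_right⟩
    have hLLP : L ≤ ⁅L, (P : Subgroup G)⁆ := by
      conv_lhs => rw [← hL]
      refine commutator_le.mpr fun l hl g _ => ?_
      obtain ⟨a, ha, c, hc, rfl⟩ := mem_sup_of_normal_left.mp (htop ▸ mem_top g)
      have hlc : l * c = c * l := mem_centralizer_iff.mp hc l hl
      have : ⁅l, a * c⁆ = ⁅l, a⁆ := by
        rw [commutatorElement_def, commutatorElement_def, mul_inv_rev, ← mul_assoc, ← mul_assoc,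
          mul_assoc (l * a) c, ← Commute.inv_left hlc |>.eq, ← mul_assoc, mul_inv_cancel_right]
      rw [this]
      exact commutator_mem_commutator hl ha
    have hlow : ∀ n, L ≤ P.toSubgroup.lowerCentralSeries n := by
      intro n
      induction n with
      | zero => exact hLP
      | succ n ih => exact hLLP.trans (commutator_mono ih le_rfl)
    have hnil : Group.IsNilpotent P := P.2.isNilpotent
    obtain ⟨n, hn⟩ : ∃ n, P.toSubgroup.lowerCentralSeries n = ⊥ :=
      (isNilpotent_iff_lowerCentralSeries _).mp hnil
    have : L = ⊥ := le_bot_iff.mp (hn ▸ hlow n)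
    subst this
    exact le_centralizer_iff.mp bot_le
  · push Not at h
    obtain ⟨q, hq, hpq, Q, hQ⟩ := h
    obtain ⟨x, hxQ, hx⟩ := SetLike.not_le_iff_exists.mp hQ
    obtain ⟨j, hj⟩ := exists_pow_pow_eq_one_of_mem Q.2 hxQ
    have hcop : (q ^ j).Coprime p :=
      ((Nat.coprime_primes hq.out hp.out).mpr hpq.symm).pow_left j
    have habel : (P : Subgroup G) ≤ centralizer (P : Set G) :=
      le_centralizer_self_of_mem_normalizer hp.out P.2 hcop hj (fun g v hv =>
        hG.sylow_le_normalizer hpq P.2 (zpowers_le.mpr hv) (g • Q) (by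
          rw [Sylow.coe_subgroup_smul]
          exact smul_mem_pointwise_smul x (MulAut.conj g) _ hxQ)) hx
    refine commutator_le_centralizer_of_forall_normal fun v hv => ?_
    have hvP : zpowers v ≤ P := zpowers_le.mpr (hLP hv)
    exact hG.normal_of_sylow_le P.2 hvP P
      ((habel.trans (centralizer_le hvP)).trans (centralizer_le_normalizer _))

theorem commutator_commutator_eq_bot {G : Type*} [Group G] [Finite G] (hsol : Group.IsSolvable G)
    (hG : SylowNormalizesSections G) {L : Subgroup G} (hL : ⁅L, (⊤ : Subgroup G)⁆ = L) :
    ⁅commutator G, L⁆ = ⊥ := by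
  induction hn : Nat.card G using Nat.strong_induction_on generalizing G with
  | _ n ih =>
  subst hn
  have hnil := isNilpotent_commutator hsol hG
  have hquot : ∀ C : Subgroup G, C.Normal → C ≠ ⊥ → ⁅commutator G, L⁆ ≤ C := by
    intro C _ hC
    have := ih _ (card_quotient_lt hC) inferInstance (hG.quotient C)
      (L := L.map (QuotientGroup.mk' C)) (by
        conv_rhs => rw [← hL, map_commutator,
          map_top_of_surjective _ (QuotientGroup.mk'_surjective C)]) rfl
    rw [← map_mk_commutator, ← map_commutator, Subgroup.map_eq_bot_iff,
      QuotientGroup.ker_mk'] at this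
    exact this
  by_cases hcase : ∃ p : ℕ, p.Prime ∧ IsPGroup p (commutator G)
  · obtain ⟨p, hp, hP⟩ := hcase
    have : Fact p.Prime := ⟨hp⟩
    exact commutator_eq_bot_iff_le_centralizer.mpr
      (commutator_le_centralizer_of_isPGroup hG hP hL)
  push Not at hcase
  have hne : Nat.card (commutator G) ≠ 1 := fun h =>
    hcase 2 Nat.prime_two (IsPGroup.of_card (n := 0) (by simpa using h))
  obtain ⟨p, hp, hpd⟩ := Nat.exists_prime_and_dvd hne
  obtain ⟨q, hq, hqd, hpq⟩ : ∃ q : ℕ, q.Prime ∧ q ∣ Nat.card (commutator G) ∧ p ≠ q := by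
    by_contra! hcon
    exact hcase p hp (IsPGroup.of_card (Nat.eq_prime_pow_of_unique_prime_dvd Nat.card_pos.ne'
      fun {d} hd hdd => (hcon d hd hdd).symm))
  have : Fact p.Prime := ⟨hp⟩
  have : Fact q.Prime := ⟨hq⟩
  obtain ⟨S⟩ : Nonempty (Sylow p (commutator G)) := inferInstance
  obtain ⟨T⟩ : Nonempty (Sylow q (commutator G)) := inferInstance
  have hdisj := IsPGroup.disjoint_of_ne p q hpq _ _ (S.2.map (commutator G).subtype)
    (T.2.map (commutator G).subtype)
  exact le_bot_iff.mp (hdisj (hquot _ (normal_map_subtype_sylow S) (map_subtype_sylow_ne_bot hpd S))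
    (hquot _ (normal_map_subtype_sylow T) (map_subtype_sylow_ne_bot hqd T)))

theorem IsNilpotentResidual.commutator_top {G : Type*} [Group G] {L : Subgroup G}
    (hL : IsNilpotentResidual L) : ⁅L, (⊤ : Subgroup G)⁆ = L := by
  have := hL.1
  obtain ⟨hnil, hmin⟩ := hL.2
  have hle : ⁅L, (⊤ : Subgroup G)⁆ ≤ L := commutator_le_left L ⊤
  refine le_antisymm hle (hmin _ ?_)
  refine Subgroup.isNilpotent_of_ker_le_center
    (QuotientGroup.map _ L (MonoidHom.id G) hle) fun g hg => ?_
  induction g using QuotientGroup.induction_on with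
  | H g =>
    have hgL : g ∈ L := (QuotientGroup.eq_one_iff _).mp hg
    refine mem_center_iff.mpr fun h => ?_
    induction h using QuotientGroup.induction_on with
    | H h =>
      have : (⁅g, h⁆ : G) ∈ ⁅L, (⊤ : Subgroup G)⁆ := commutator_mem_commutator hgL (mem_top h)
      rw [← QuotientGroup.eq_one_iff] at this
      exact (commutatorElement_eq_one_iff_commute.mp this).eq.symm

/-- The product of two permuting `p`-subgroups is a `p`-group. -/
theorem isPGroup_sup_of_mul_comm {G : Type*} [Group G] [Finite G] {p : ℕ} [Fact p.Prime]
    {H K : Subgroup G} (hH : IsPGroup p H) (hK : IsPGroup p K)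
    (hHK : (H : Set G) * (K : Set G) = (K : Set G) * (H : Set G)) :
    IsPGroup p (H ⊔ K : Subgroup G) := by
  have hcoe : ((H ⊔ K : Subgroup G) : Set G) = (H : Set G) * (K : Set G) := by
    let HK : Subgroup G :=
      { carrier := (H : Set G) * (K : Set G)
        one_mem' := ⟨1, H.one_mem, 1, K.one_mem, one_mul 1⟩
        mul_mem' := by
          intro a b ha hb
          have hmem := Set.mul_mem_mul ha hb
          rwa [mul_assoc, ← mul_assoc (K : Set G), ← hHK, mul_assoc, coe_mul_coe, ← mul_assoc,
            coe_mul_coe] at hmem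
        inv_mem' := by
          intro a ha
          rwa [← Set.mem_inv, mul_inv_rev, inv_coe_set, inv_coe_set, ← hHK] }
    refine Set.Subset.antisymm (SetLike.coe_subset_coe (T := HK).mpr (sup_le ?_ ?_)) ?_
    · exact fun h hh => ⟨h, hh, 1, K.one_mem, mul_one h⟩
    · exact fun k hk => ⟨1, H.one_mem, k, hk, one_mul k⟩
    · exact Set.mul_subset_iff.mpr fun h hh k hk => mul_mem_sup hh hk
  obtain ⟨a, ha⟩ := IsPGroup.iff_card.mp hK
  obtain ⟨b, hb⟩ := hH.card_orbit ((1 : G) : G ⧸ K)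
  have horb : MulAction.orbit H ((1 : G) : G ⧸ K) =
      Set.image (fun g : G => (g : G ⧸ K)) (H : Set G) := by
    ext y
    constructor
    · rintro ⟨h, rfl⟩
      exact ⟨h, h.2, congrArg QuotientGroup.mk (mul_one (h : G)).symm⟩
    · rintro ⟨h, hh, rfl⟩
      exact ⟨⟨h, hh⟩, congrArg QuotientGroup.mk (mul_one h)⟩
  refine IsPGroup.of_card (n := a + b) ?_
  have := card_mul_eq_card_subgroup_mul_card_quotient K (H : Set G)
  rw [← hcoe, ha, ← horb, hb, ← pow_add] at this
  exact this

end Residual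

/-- Lemma 2.7. -/
theorem lemma27 {G : Type*} [Group G] [Finite G]
    (hsol : IsSolvable G) (hpst : IsPSTGroup G)
    (L D : Subgroup G) (hL : IsNilpotentResidual L) (hD : L.IsComplement' D) :
    ((commutator D).map D.subtype).Normal ∧
      ∀ (p : ℕ), p.Prime → p ∣ Nat.card G →
        ∀ H : Subgroup G, IsPGroup p H → ∀ K : Subgroup G, IsSSSupplement H K →
          ∀ Kp : Sylow p K, ⁅H, Kp.toSubgroup.map K.subtype⁆ ≤ pCore p G := by
  have hG := hpst.sylowNormalizesSections
  have hcent : commutator G ≤ Subgroup.centralizer (L : Set G) :=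
    Subgroup.commutator_eq_bot_iff_le_centralizer.mp
      (commutator_commutator_eq_bot hsol hG hL.commutator_top)
  constructor
  · refine ⟨?_⟩
    rintro _ ⟨a, ha, rfl⟩ g
    obtain ⟨⟨l, d⟩, rfl⟩ := hD.2 g
    have hconj := (inferInstance : (commutator D).Normal).conj_mem a ha d
    have hmem : ((d * a * d⁻¹ : D) : G) ∈ commutator G := by
      have h1 : ((d * a * d⁻¹ : D) : G) ∈ (commutator D).map D.subtype := ⟨_, hconj, rfl⟩
      rw [Subgroup.map_subtype_commutator] at h1
      exact Subgroup.commutator_mono le_top le_top h1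
    refine ⟨_, hconj, ?_⟩
    have hcomm : (l : G) * (d * a * d⁻¹ : D) = (d * a * d⁻¹ : D) * l :=
      Subgroup.mem_centralizer_iff.mp (hcent hmem) l l.2
    calc ((d * a * d⁻¹ : D) : G) = l * (d * a * d⁻¹ : D) * (l : G)⁻¹ := by
          rw [hcomm, mul_inv_cancel_right]
      _ = l * d * a * (l * d : G)⁻¹ := by push_cast; group
  · intro p hp _ H hH K hK Kp
    have : Fact p.Prime := ⟨hp⟩
    have hnil := isNilpotent_commutator hsol hG
    have hsup := isPGroup_sup_of_mul_comm hH (Kp.2.map K.subtype) (hK.2 p Kp)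
    have hle : ⁅H, Kp.toSubgroup.map K.subtype⁆ ≤ commutator G :=
      Subgroup.commutator_mono le_top le_top
    have hpg : IsPGroup p (⁅H, Kp.toSubgroup.map K.subtype⁆ : Subgroup G) :=
      hsup.to_le (Subgroup.commutator_le_sup _ _)
    obtain ⟨S, hS⟩ := (hpg.comap_subtype (K := commutator G)).exists_le_sylow
    refine le_trans ?_ (le_sSup ⟨normal_map_subtype_sylow S, S.2.map (commutator G).subtype⟩)
    exact fun g hg => ⟨⟨g, hle hg⟩, hS hg, rfl⟩
end

section
/- Let G be a finite solvable BT-group with nilpotent residual L, and let H be a p-subgroup of G, where p is a prime dividing |G| but not dividing |L|. If G has a p-subgroup K_p such that HK_p is a Sylow p-subgroup of G and [H, ⟨K_p^L⟩] ≤ O_p(G), then H is SS-permutable in G. -/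
open scoped Pointwise

namespace Subgroup

open scoped commutatorElement

variable {G : Type*} [Group G]

/-- Containment of subgroups can be tested on one Sylow subgroup for each prime. -/
theorem le_of_forall_exists_sylow_le [Finite G] {X Y : Subgroup G}
    (h : ∀ (q : ℕ) [Fact q.Prime], ∃ Q : Sylow q X, (Q : Subgroup X).map X.subtype ≤ Y) :
    X ≤ Y := by
  rw [← relIndex_eq_one]
  by_contra hne
  obtain ⟨q, hq, hdvd⟩ := Nat.exists_prime_and_dvd hne
  have : Fact q.Prime := ⟨hq⟩
  obtain ⟨Q, hQ⟩ := h q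
  refine Q.not_dvd_index (hdvd.trans (index_dvd_of_le (K := Y.subgroupOf X) fun x hx => ?_))
  exact hQ (mem_map_of_mem X.subtype hx)

/-- Containment of subgroups can be tested on subgroups of prime power order. -/
theorem le_of_forall_isPGroup_le [Finite G] {X Y : Subgroup G}
    (h : ∀ (q : ℕ) [Fact q.Prime] (Q : Subgroup G), IsPGroup q Q → Q ≤ X → Q ≤ Y) : X ≤ Y :=
  le_of_forall_exists_sylow_le fun q _ =>
    have Q : Sylow q X := Classical.arbitrary _
    ⟨Q, h q _ (Q.isPGroup'.map X.subtype) (map_subtype_le _)⟩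

theorem eq_top_of_forall_exists_sylow_le [Finite G] {Y : Subgroup G}
    (h : ∀ (q : ℕ) [Fact q.Prime], ∃ Q : Sylow q G, (Q : Subgroup G) ≤ Y) : Y = ⊤ := by
  refine top_le_iff.mp (le_of_forall_exists_sylow_le fun q _ => ?_)
  obtain ⟨Q, hQ⟩ := h q
  exact ⟨Q.subtype le_top, (map_subgroupOf_eq_of_le le_top).trans_le hQ⟩

theorem eq_one_of_mem_isPGroup_of_not_dvd {p : ℕ} [Fact p.Prime] {T X : Subgroup G} [Finite X]
    (hT : IsPGroup p T) (hX : ¬ p ∣ Nat.card X) {y : G} (hyT : y ∈ T) (hyX : y ∈ X) : y = 1 := by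
  by_contra hy
  refine hX (dvd_trans ?_ (X.orderOf_dvd_natCard hyX))
  have := hT.dvd_orderOf (g := ⟨y, hyT⟩) (by simpa [Subtype.ext_iff] using hy)
  simpa using this

theorem not_dvd_card_of_isPGroup_of_ne {p q : ℕ} [Fact p.Prime] [Fact q.Prime] (hne : p ≠ q)
    {Q : Subgroup G} [Finite Q] (hQ : IsPGroup q Q) : ¬ p ∣ Nat.card Q := by
  obtain ⟨n, hn⟩ := IsPGroup.iff_card.mp hQ
  rw [hn]
  intro h
  exact hne ((Nat.prime_dvd_prime_iff_eq Fact.out Fact.out).mp (Nat.Prime.dvd_of_dvd_pow Fact.out h))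

/-- A `p`-subgroup centralizes a nontrivial element of every nontrivial normal `p`-subgroup. -/
theorem exists_ne_one_mem_commute_of_isPGroup [Finite G] {p : ℕ} [Fact p.Prime] {N P : Subgroup G}
    [N.Normal] (hN : IsPGroup p N) (hP : IsPGroup p P) (hne : N ≠ ⊥) :
    ∃ w ∈ N, w ≠ 1 ∧ ∀ g ∈ P, g * w * g⁻¹ = w := by
  let _ : MulAction P N := MulAction.compHom N ((MulAut.conjNormal (H := N)).comp P.subtype)
  have hsmul (g : P) (x : N) : ((g • x : N) : G) = g * x * (g : G)⁻¹ :=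
    MulAut.conjNormal_apply (g : G) x
  have hdvd : p ∣ Nat.card N :=
    hN.card_eq_or_dvd.resolve_left fun h => hne (eq_bot_of_card_eq _ h)
  obtain ⟨w, hw, hw1⟩ := hP.exists_fixed_point_of_prime_dvd_card_of_fixed_point N hdvd (a := 1)
    (fun g => Subtype.ext (by simp [hsmul]))
  refine ⟨w, w.2, fun h => hw1 (Subtype.ext h.symm), fun g hg => ?_⟩
  rw [← hsmul ⟨g, hg⟩ w, hw ⟨g, hg⟩]

/-- The derived subgroup centralizes every element generating a normal subgroup. -/
theorem commute_of_mem_commutator_of_normalizer_zpowers {w : G}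
    (hw : ∀ g : G, g * w * g⁻¹ ∈ zpowers w) {c : G} (hc : c ∈ _root_.commutator G) :
    c * w = w * c := by
  suffices _root_.commutator G ≤ centralizer {w} from
    (mem_centralizer_singleton_iff.mp (this hc))
  rw [_root_.commutator_def, commutator_le]
  intro a _ b _
  obtain ⟨m, hm⟩ := mem_zpowers_iff.mp (hw a⁻¹)
  obtain ⟨n, hn⟩ := mem_zpowers_iff.mp (hw b⁻¹)
  have key (x y : G) (i j : ℤ) (hi : w ^ i = x * w * x⁻¹) (hj : w ^ j = y * w * y⁻¹) :
      x * y * w * (x * y)⁻¹ = w ^ (i * j) := by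
    rw [zpow_mul, hi, conj_zpow, hj]; group
  have hab := key _ _ m n hm hn
  have hba := key _ _ n m hn hm
  rw [mul_comm n m, ← hab] at hba
  rw [mem_centralizer_singleton_iff, commutatorElement_def]
  calc a * b * a⁻¹ * b⁻¹ * w
      = a * b * (a⁻¹ * b⁻¹ * w * (a⁻¹ * b⁻¹)⁻¹) * (a⁻¹ * b⁻¹) := by group
    _ = w * (a * b * a⁻¹ * b⁻¹) := by rw [← hba]; group

end Subgroup

section BTGroup

open Subgroup
open scoped commutatorElement

variable {G : Type*} [Group G]

theorem isSemipermutable_of_normal (N : Subgroup G) [N.Normal] : IsSemipermutable N := by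
  intro X _
  rw [← Subgroup.normal_mul, ← Subgroup.mul_normal, sup_comm]

theorem IsBTGroup.isSemipermutable_of_le_normal (hbt : IsBTGroup G) {A T : Subgroup G} [T.Normal]
    (hAT : A ≤ T) (hA : ∀ X : Subgroup G, X ≤ T → Nat.Coprime (Nat.card A) (Nat.card X) →
      A ≤ normalizer (X : Set G)) : IsSemipermutable A := by
  refine hbt A T hAT (fun X hX => ?_) (isSemipermutable_of_normal T)
  have hle : A.subgroupOf T ≤ normalizer (X : Set T) := by
    have h := hA (X.map T.subtype) (map_subtype_le X) (by
      rwa [card_subtype, ← Nat.card_congr (subgroupOfEquivOfLe hAT).toEquiv])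
    intro a ha
    rw [mem_normalizer_iff]
    intro x
    have : T.subtype x ∈ X.map T.subtype ↔ T.subtype (a * x * a⁻¹) ∈ X.map T.subtype :=
      mem_normalizer_iff.mp (h ha) x
    rwa [mem_map_iff_mem T.subtype_injective, mem_map_iff_mem T.subtype_injective] at this
  exact set_mul_normalizer_comm _ _ hle

theorem Subgroup.eq_bot_or_not_dvd_of_coprime {p : ℕ} [Fact p.Prime] {A X : Subgroup G}
    (hA : IsPGroup p A) [Finite A] (h : Nat.Coprime (Nat.card A) (Nat.card X)) :
    A = ⊥ ∨ ¬ p ∣ Nat.card X := by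
  rcases hA.card_eq_or_dvd with h1 | h1
  · exact Or.inl (eq_bot_of_card_eq _ h1)
  · exact Or.inr fun h2 => Nat.not_coprime_of_dvd_of_dvd (Fact.out : p.Prime).one_lt h1 h2 h

variable [Finite G]

theorem IsBTGroup.isSemipermutable_of_le_normal_isPGroup (hbt : IsBTGroup G) {p : ℕ}
    [Fact p.Prime] {A T : Subgroup G} [T.Normal] (hT : IsPGroup p T) (hAT : A ≤ T) :
    IsSemipermutable A := by
  refine hbt.isSemipermutable_of_le_normal hAT fun X hXT hcop => ?_
  rcases eq_bot_or_not_dvd_of_coprime (hT.to_le hAT) hcop with rfl | hX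
  · exact bot_le
  · have : X = ⊥ := (eq_bot_iff_forall X).mpr fun y hy =>
      eq_one_of_mem_isPGroup_of_not_dvd hT hX (hXT hy) hy
    subst this
    exact le_normalizer_of_normal

/-- In a BT-group, `p'`-subgroups normalize every subgroup of a normal `p`-subgroup. -/
theorem IsBTGroup.le_normalizer_of_le_normal_isPGroup (hbt : IsBTGroup G) {p : ℕ}
    [Fact p.Prime] {A T X : Subgroup G} [T.Normal] (hT : IsPGroup p T) (hAT : A ≤ T)
    (hX : ¬ p ∣ Nat.card X) : X ≤ normalizer (A : Set G) := by
  have hcop : Nat.Coprime (Nat.card A) (Nat.card X) := by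
    obtain ⟨n, hn⟩ := IsPGroup.iff_card.mp (hT.to_le hAT)
    rw [hn]
    exact Nat.Coprime.pow_left _ ((Nat.Prime.coprime_iff_not_dvd Fact.out).mpr hX)
  have hperm := hbt.isSemipermutable_of_le_normal_isPGroup hT hAT X hcop
  have key : ∀ x ∈ X, ∀ a ∈ A, x * a * x⁻¹ ∈ A := by
    intro x hx a ha
    obtain ⟨b, hb, y, hy, hby⟩ : x * a ∈ (A : Set G) * (X : Set G) :=
      hperm ▸ Set.mul_mem_mul hx ha
    simp only [SetLike.mem_coe] at hb hy
    have hxa : x * a * x⁻¹ = b * (y * x⁻¹) := by rw [← hby]; simp [mul_assoc]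
    have hyT : y * x⁻¹ ∈ T := by
      have := T.mul_mem (T.inv_mem (hAT hb)) (Normal.conj_mem ‹_› a (hAT ha) x)
      rwa [hxa, inv_mul_cancel_left] at this
    rw [hxa, eq_one_of_mem_isPGroup_of_not_dvd hT hX hyT (X.mul_mem hy (X.inv_mem hx)), mul_one]
    exact hb
  intro x hx
  rw [mem_normalizer_iff]
  refine fun a => ⟨key x hx a, fun h => ?_⟩
  simpa [mul_assoc] using key x⁻¹ (X.inv_mem hx) _ h

/-- In a BT-group, a normal subgroup that is its own relative hypercenter in a subgroup `L` of the
derived subgroup contains all normal `p`-subgroups in `L`. -/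
theorem IsBTGroup.le_of_normal_isPGroup (hbt : IsBTGroup G) {L Z T : Subgroup G} [Z.Normal]
    [T.Normal] (hL : L ≤ _root_.commutator G) (hTL : T ≤ L)
    (hZ : ∀ x ∈ L, (∀ l ∈ L, ⁅x, l⁆ ∈ Z) → x ∈ Z) {p : ℕ} [Fact p.Prime] (hT : IsPGroup p T) :
    T ≤ Z := by
  by_contra hTZ
  let π := QuotientGroup.mk' Z
  have hπ : Function.Surjective π := QuotientGroup.mk'_surjective Z
  obtain ⟨P⟩ : Nonempty (Sylow p G) := inferInstance
  have : (T.map π).Normal := Normal.map ‹_› π hπ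
  obtain ⟨_, ⟨w, hwT, rfl⟩, hw1, hwP⟩ := exists_ne_one_mem_commute_of_isPGroup
    (hT.map π) (P.isPGroup'.map π) (fun h => hTZ (by
      simpa [π, Subgroup.map_eq_bot_iff] using h))
  have htop : (normalizer (zpowers (π w) : Set (G ⧸ Z))).comap π = ⊤ := by
    refine eq_top_of_forall_exists_sylow_le fun q _ => ?_
    rcases eq_or_ne p q with rfl | hne
    · refine ⟨P, fun g hg => ?_⟩
      rw [mem_comap, mem_normalizer_iff_map_conj_eq, MonoidHom.map_zpowers]
      exact congrArg zpowers (hwP _ (mem_map_of_mem π hg))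
    · obtain ⟨Q⟩ : Nonempty (Sylow q G) := inferInstance
      refine ⟨Q, fun g hg => ?_⟩
      have h := hbt.le_normalizer_of_le_normal_isPGroup hT (zpowers_le.mpr hwT)
        (not_dvd_card_of_isPGroup_of_ne hne Q.isPGroup') hg
      rw [mem_normalizer_iff_map_conj_eq] at h
      rw [mem_comap, mem_normalizer_iff_map_conj_eq, ← MonoidHom.map_zpowers]
      conv_rhs => rw [← h]
      rw [Subgroup.map_map, Subgroup.map_map]
      congr 1
  have hnorm : ∀ g : G ⧸ Z, g * π w * g⁻¹ ∈ zpowers (π w) := by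
    intro g
    obtain ⟨g, rfl⟩ := hπ g
    exact (mem_normalizer_iff.mp (htop.ge (mem_top g)) _).mp (mem_zpowers _)
  have hwZ : w ∈ Z := by
    refine hZ w (hTL hwT) fun l hl => ?_
    have hmem : π l ∈ _root_.commutator (G ⧸ Z) := by
      have := mem_map_of_mem π (hL hl)
      rw [_root_.commutator_def, map_commutator] at this
      exact commutator_mono le_top le_top this
    have := commute_of_mem_commutator_of_normalizer_zpowers hnorm hmem
    rw [← QuotientGroup.eq_one_iff]
    change π ⁅w, l⁆ = 1
    rw [map_commutatorElement, commutatorElement_eq_one_iff_mul_comm, this]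
  exact hw1 ((QuotientGroup.eq_one_iff w).mpr hwZ)

/-- The nilpotent residual of a solvable BT-group is nilpotent. -/
theorem IsBTGroup.isNilpotent_of_le_commutator (hbt : IsBTGroup G) [Group.IsSolvable G]
    {L : Subgroup G} [L.Normal] (hL : L ≤ _root_.commutator G) : Group.IsNilpotent L := by
  let U (n : ℕ) : Subgroup G := (Subgroup.upperCentralSeries L n).map L.subtype
  have hU (n : ℕ) {x l : G} (hx : x ∈ U (n + 1)) (hl : l ∈ L) : ⁅x, l⁆ ∈ U n := by
    obtain ⟨x, hx, rfl⟩ := hx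
    exact ⟨⁅x, ⟨l, hl⟩⁆, Subgroup.mem_upperCentralSeries_succ_iff.mp hx ⟨l, hl⟩, rfl⟩
  obtain ⟨n, hn⟩ : ∃ n, ∀ m, n ≤ m → Subgroup.upperCentralSeries L n = Subgroup.upperCentralSeries L m :=
    WellFoundedGT.monotone_chain_condition ⟨_, Subgroup.upperCentralSeries_mono L⟩
  have hZ : ∀ x ∈ L, (∀ l ∈ L, ⁅x, l⁆ ∈ U n) → x ∈ U n := by
    intro x hx h
    refine ⟨⟨x, hx⟩, ?_, rfl⟩
    rw [hn (n + 1) n.le_succ]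
    refine Subgroup.mem_upperCentralSeries_succ_iff.mpr fun l => ?_
    obtain ⟨y, hy, hyx⟩ := h l l.2
    rwa [show ⁅(⟨x, hx⟩ : L), l⁆ = y from Subtype.ext hyx.symm]
  have hstep (M : Subgroup G) [M.Normal] (hML : M ≤ L) (hM : ⁅M, M⁆ ≤ U n) : M ≤ U n := by
    have hlcs (i : ℕ) (hi : i ≤ n) : M.lowerCentralSeries (i + 1) ≤ U (n - i) := by
      induction i with
      | zero => exact hM
      | succ i ih =>
        rw [Subgroup.lowerCentralSeries_succ, commutator_le]
        intro x hx y hy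
        refine hU (n - (i + 1)) ?_ (hML hy)
        rw [show n - (i + 1) + 1 = n - i by omega]
        exact ih (by omega) hx
    have hnil : Group.IsNilpotent M := by
      refine isNilpotent_of_lowerCentralSeries_eq_bot (n := n + 1) (le_bot_iff.mp ?_)
      simpa [U] using hlcs n le_rfl
    refine le_of_forall_exists_sylow_le fun q _ => ?_
    obtain ⟨Q⟩ : Nonempty (Sylow q M) := inferInstance
    have hQ : (Q : Subgroup M).Normal := inferInstance
    have := Q.characteristic_of_normal hQ
    exact ⟨Q, hbt.le_of_normal_isPGroup hL ((map_subtype_le _).trans hML) hZ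
      (Q.isPGroup'.map M.subtype)⟩
  have hLU : L ≤ U n := by
    obtain ⟨k, hk⟩ := (Group.isSolvable_def G).mp ‹_›
    have hder (j : ℕ) (hj : j ≤ k) : derivedSeries G (k - j) ⊓ L ≤ U n := by
      induction j with
      | zero => simp [hk]
      | succ j ih =>
        refine hstep _ inf_le_right (le_trans (le_inf ?_ ?_) (ih (by omega)))
        · rw [show k - j = k - (j + 1) + 1 by omega, derivedSeries_succ]
          exact commutator_mono inf_le_left inf_le_left
        · exact (commutator_mono inf_le_right inf_le_right).trans (commutator_le_self L)
    simpa using hder k le_rfl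
  refine ⟨n, ?_⟩
  rw [eq_top_iff]
  intro x _
  obtain ⟨y, hy, hyx⟩ := hLU x.2
  rwa [← show y = x from Subtype.ext hyx]

/-- In a solvable BT-group, `p`-subgroups are semipermutable when `p` does not divide the order of
a normal subgroup of the derived subgroup with nilpotent quotient. -/
theorem IsBTGroup.isSemipermutable_of_isPGroup (hbt : IsBTGroup G) [Group.IsSolvable G]
    {L : Subgroup G} [L.Normal] (hL : L ≤ _root_.commutator G) (hGL : Group.IsNilpotent (G ⧸ L))
    {p : ℕ} [Fact p.Prime] (hpL : ¬ p ∣ Nat.card L) {H : Subgroup G} (hH : IsPGroup p H) :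
    IsSemipermutable H := by
  have hLnil := hbt.isNilpotent_of_le_commutator hL
  let π := QuotientGroup.mk' L
  obtain ⟨P, hP⟩ := (hH.map π).exists_le_sylow
  have hPn : (P : Subgroup (G ⧸ L)).Normal := inferInstance
  have hB : ((P : Subgroup (G ⧸ L)).comap π).Normal := hPn.comap π
  refine hbt.isSemipermutable_of_le_normal (map_le_iff_le_comap.mp hP) fun X hX hcop => ?_
  rcases eq_bot_or_not_dvd_of_coprime hH hcop with rfl | hpX
  · exact bot_le
  have hXL : X ≤ L := by
    intro x hx
    rw [← QuotientGroup.eq_one_iff]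
    exact eq_one_of_mem_isPGroup_of_not_dvd P.isPGroup' (X := X.map π)
      (fun h => hpX (h.trans (card_map_dvd X π))) (hX hx) (mem_map_of_mem π hx)
  have key (h : G) (hh : h ∈ H) : X ≤ X.comap (MulAut.conj h).toMonoidHom := by
    refine le_of_forall_isPGroup_le fun q _ Q hQ hQX => ?_
    obtain ⟨S, hS⟩ := (hQ.comap_subtype (K := L)).exists_le_sylow
    have hSn : (S : Subgroup L).Normal := inferInstance
    have := S.characteristic_of_normal hSn
    have hQS : Q ≤ (S : Subgroup L).map L.subtype := fun y hy =>
      ⟨⟨y, hXL (hQX hy)⟩, hS hy, rfl⟩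
    intro y hy
    rcases eq_or_ne q p with rfl | hne
    · simp [eq_one_of_mem_isPGroup_of_not_dvd hQ hpL hy (hXL (hQX hy))]
    · exact hQX ((mem_normalizer_iff.mp (hbt.le_normalizer_of_le_normal_isPGroup
        (S.isPGroup'.map L.subtype) hQS (not_dvd_card_of_isPGroup_of_ne hne hH) hh) y).mp hy)
  intro h hh
  rw [mem_normalizer_iff]
  refine fun x => ⟨fun hx => key h hh hx, fun hx => ?_⟩
  simpa [mul_assoc] using key h⁻¹ (H.inv_mem hh) hx

end BTGroup

section Supplement

open Subgroup
open scoped commutatorElement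

variable {G : Type*} [Group G]

/-- An element `h` of `p`-power order normalizing a `p'`-group commutes with `l` once it
commutes with `⁅l, h⁻¹⁆`. -/
theorem commutatorElement_eq_one_of_commute {p : ℕ} [Fact p.Prime] {L : Subgroup G}
    (hpL : ¬ p ∣ Nat.card L) {h l : G} {n : ℕ} (hn : h ^ p ^ n = 1)
    (hmem : ⁅l, h⁻¹⁆ ∈ L) (hcomm : Commute h ⁅l, h⁻¹⁆) : ⁅l, h⁻¹⁆ = 1 := by
  set c := ⁅l, h⁻¹⁆ with hc
  have hconj (m : ℕ) : l * h⁻¹ ^ m * l⁻¹ = c ^ m * h⁻¹ ^ m := by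
    rw [← conj_pow, ← hcomm.symm.inv_right.mul_pow, hc, commutatorElement_def]
    group
  have hpow : c ^ p ^ n = 1 := by
    have := hconj (p ^ n)
    rw [inv_pow, hn] at this
    simpa using this.symm
  have hcop : Nat.Coprime (p ^ n) (Nat.card L) :=
    Nat.Coprime.pow_left _ ((Nat.Prime.coprime_iff_not_dvd Fact.out).mpr hpL)
  exact orderOf_eq_one_iff.mp (Nat.eq_one_of_dvd_coprimes hcop (orderOf_dvd_of_pow_eq_one hpow)
    (L.orderOf_dvd_natCard hmem))

variable [Finite G]

/-- A Sylow subgroup of a finite nilpotent group is a direct factor. -/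
theorem Sylow.exists_commuting_complement_of_isNilpotent (hG : Group.IsNilpotent G) {p : ℕ}
    [Fact p.Prime] (P : Sylow p G) :
    ∃ N : Subgroup G, ¬ p ∣ Nat.card N ∧ (∀ x : G, ∃ a ∈ P, ∃ n ∈ N, a * n = x) ∧
      ∀ a ∈ P, ∀ n ∈ N, a * n = n * a := by
  have hSyl := Group.isNilpotent_of_finite_tfae.out 0 3 |>.mp hG
  have hP := hSyl p ‹_› P
  obtain ⟨N, hN⟩ := exists_right_complement'_of_coprime P.card_coprime_index
  have hpN : ¬ p ∣ Nat.card N := hN.symm.index_eq_card ▸ P.not_dvd_index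
  refine ⟨N, hpN, fun x => ?_, fun a ha n hn => ?_⟩
  · have hx : x ∈ (P : Set G) * (N : Set G) := hN.mul_eq ▸ Set.mem_univ x
    exact hx
  · have hle : N ≤ centralizer (P : Set G) := by
      refine le_of_forall_isPGroup_le fun q _ Q hQ hQN y hy => ?_
      rw [mem_centralizer_iff]
      intro b hb
      rcases eq_or_ne q p with rfl | hne
      · simp [eq_one_of_mem_isPGroup_of_not_dvd hQ hpN hy (hQN hy)]
      · obtain ⟨R, hR⟩ := hQ.exists_le_sylow
        exact commute_of_normal_of_disjoint _ _ hP (hSyl q ‹_› R)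
          (IsPGroup.disjoint_of_ne p q hne.symm _ _ P.isPGroup' R.isPGroup') b y hb (hR hy)
    exact mem_centralizer_iff.mp (hle hn) a ha

/-- If `L` is a normal `p'`-subgroup, then the `p`-subgroups of `L ⊔ A` are contained in
`L`-conjugates of the `p`-subgroup `A`. -/
theorem IsPGroup.exists_le_map_conj_of_le_sup {p : ℕ} [Fact p.Prime] {L A S : Subgroup G}
    [L.Normal] (hpL : ¬ p ∣ Nat.card L) (hA : IsPGroup p A) (hS : IsPGroup p S)
    (hSA : S ≤ L ⊔ A) : ∃ l ∈ L, S ≤ A.map (MulAut.conj l).toMonoidHom := by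
  obtain ⟨Q, hQ⟩ := (hA.comap_subtype (K := L ⊔ A)).exists_le_sylow
  obtain ⟨R, hR⟩ := (hS.comap_subtype (K := L ⊔ A)).exists_le_sylow
  have hQA (x : (L ⊔ A : Subgroup G)) (hx : x ∈ Q) : (x : G) ∈ A := by
    obtain ⟨l, hl, a, ha, hla⟩ := mem_sup_of_normal_left.mp x.2
    have haQ : (⟨a, le_sup_right (a := L) ha⟩ : (L ⊔ A : Subgroup G)) ∈ Q := hQ ha
    have hlQ : l ∈ (Q : Subgroup (L ⊔ A : Subgroup G)).map (L ⊔ A).subtype :=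
      ⟨x * ⟨a, le_sup_right (a := L) ha⟩⁻¹, Q.mul_mem hx (Q.inv_mem haQ), by simp [← hla]⟩
    rw [← hla, eq_one_of_mem_isPGroup_of_not_dvd (Q.isPGroup'.map _) hpL hlQ hl, one_mul]
    exact ha
  obtain ⟨g, hg⟩ := MulAction.exists_smul_eq (L ⊔ A : Subgroup G) Q R
  obtain ⟨l, hl, a, ha, hla⟩ := mem_sup_of_normal_left.mp g.2
  refine ⟨l, hl, fun s hs => ?_⟩
  have hsR : (⟨s, hSA hs⟩ : (L ⊔ A : Subgroup G)) ∈ R := hR hs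
  rw [← hg, ← SetLike.mem_coe, Sylow.coe_smul, Set.mem_smul_set] at hsR
  obtain ⟨q, hq, hqs⟩ := hsR
  have hqs' : (g : G) * q * (g : G)⁻¹ = s := congrArg Subtype.val hqs
  refine ⟨a * q * a⁻¹, A.mul_mem (A.mul_mem ha (hQA q hq)) (A.inv_mem ha), ?_⟩
  simp [← hqs', ← hla, mul_assoc]

theorem mul_map_conj_comm_of_commutator_le {p : ℕ} [Fact p.Prime] {L H A O : Subgroup G}
    [L.Normal] [O.Normal] (hpL : ¬ p ∣ Nat.card L) (hO : IsPGroup p O) (hH : IsPGroup p H)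
    (hOHA : (O : Set G) ⊆ (H : Set G) * (A : Set G))
    (hcomm : ⁅H, ⨆ l ∈ L, A.map (MulAut.conj l).toMonoidHom⁆ ≤ O) {l : G} (hl : l ∈ L) :
    (H : Set G) * (A.map (MulAut.conj l).toMonoidHom : Subgroup G) =
      (A.map (MulAut.conj l).toMonoidHom : Subgroup G) * (H : Set G) := by
  set M : Subgroup G := ⨆ l ∈ L, A.map (MulAut.conj l).toMonoidHom with hM
  have hAM (l : G) (hl : l ∈ L) : A.map (MulAut.conj l).toMonoidHom ≤ M :=
    le_iSup₂_of_le l hl le_rfl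
  have hdisj : Disjoint O L := disjoint_def.mpr fun hx hx' =>
    eq_one_of_mem_isPGroup_of_not_dvd hO hpL hx hx'
  have hcentral (h : G) (hh : h ∈ H) (k : G) (hk : k ∈ A) (hhk : h * k ∈ O) : Commute l k := by
    have hlkL : ⁅l, k⁆ ∈ L := by
      rw [commutatorElement_def, mul_assoc, mul_assoc, ← mul_assoc k]
      exact L.mul_mem hl (Normal.conj_mem ‹_› _ (L.inv_mem hl) k)
    have hlkM : ⁅l, k⁆ ∈ M :=
      M.mul_mem (hAM l hl ⟨k, hk, rfl⟩) (M.inv_mem (hAM 1 L.one_mem ⟨k, hk, by simp⟩))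
    have hhlk : Commute h ⁅l, k⁆ := by
      rw [← commutatorElement_eq_one_iff_commute]
      refine disjoint_def.mp hdisj (hcomm (commutator_mem_commutator hh hlkM)) ?_
      exact L.mul_mem (Normal.conj_mem ‹_› _ hlkL h) (L.inv_mem hlkL)
    have hx : Commute (h * k) l :=
      commute_of_normal_of_disjoint _ _ ‹_› ‹_› hdisj _ _ hhk hl
    have heq : ⁅l, k⁆ = ⁅l, h⁻¹⁆ := by
      calc ⁅l, k⁆ = l * h⁻¹ * ((h * k) * l⁻¹ * (h * k)⁻¹) * h := by
            rw [commutatorElement_def]; group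
        _ = ⁅l, h⁻¹⁆ := by
            rw [hx.inv_right.eq, commutatorElement_def]; group
    obtain ⟨n, hn⟩ := isPGroup_iff_pow_pow_eq_one.mp hH ⟨h, hh⟩
    rw [heq] at hlkL hhlk
    rw [← commutatorElement_eq_one_iff_commute, heq]
    exact commutatorElement_eq_one_of_commute hpL (by simpa using congrArg Subtype.val hn)
      hlkL hhlk
  have hsub (s : G) (hs : s ∈ A.map (MulAut.conj l).toMonoidHom) (h : G) (hh : h ∈ H) :
      ∃ h' ∈ H, ∃ s' ∈ A.map (MulAut.conj l).toMonoidHom, h' * s' = s * h := by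
    have hc : ⁅s, h⁆ ∈ O := by
      rw [← commutatorElement_inv]
      exact O.inv_mem (hcomm (commutator_mem_commutator hh (hAM l hl hs)))
    have hx : h⁻¹ * ⁅s, h⁆ * h ∈ O := by
      simpa using Normal.conj_mem ‹O.Normal› _ hc h⁻¹
    obtain ⟨h', hh', k, hk, hhk⟩ := hOHA hx
    simp only [SetLike.mem_coe] at hh' hk hhk
    have hkl := hcentral h' hh' k hk (hhk ▸ hx)
    refine ⟨h * h', H.mul_mem hh hh', k * s, mul_mem ⟨k, hk, ?_⟩ hs, ?_⟩
    · simp [hkl.eq]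
    · calc h * h' * (k * s) = h * (h' * k) * s := by group
        _ = s * h := by rw [hhk, commutatorElement_def]; group
  apply Set.Subset.antisymm
  · rintro _ ⟨h, hh, s, hs, rfl⟩
    obtain ⟨h', hh', s', hs', heq⟩ := hsub s⁻¹ (inv_mem hs) h⁻¹ (inv_mem hh)
    exact ⟨s'⁻¹, inv_mem hs', h'⁻¹, inv_mem hh', by
      simpa using congrArg (·⁻¹) heq⟩
  · rintro _ ⟨s, hs, h, hh, rfl⟩
    obtain ⟨h', hh', s', hs', heq⟩ := hsub s hs h hh
    exact ⟨h', hh', s', hs', heq⟩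

/-- If `L` is a normal `p'`-subgroup with nilpotent quotient and `H * A` is a Sylow `p`-subgroup,
then `H` has a supplement whose Sylow `p`-subgroups are `L`-conjugates of `A`. -/
theorem exists_supplement_sylow_eq_map_conj {p : ℕ} [Fact p.Prime] {L H A : Subgroup G}
    [L.Normal] (hGL : Group.IsNilpotent (G ⧸ L)) (hpL : ¬ p ∣ Nat.card L) (hA : IsPGroup p A)
    (Q : Sylow p G) (hQ : (H : Set G) * (A : Set G) = ((Q : Subgroup G) : Set G)) :
    ∃ K : Subgroup G, (H : Set G) * (K : Set G) = Set.univ ∧ ∀ S : Sylow p K,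
      ∃ l ∈ L, (S : Subgroup K).map K.subtype = A.map (MulAut.conj l).toMonoidHom := by
  let π := QuotientGroup.mk' L
  have hπ : Function.Surjective π := QuotientGroup.mk'_surjective L
  let P := Q.mapSurjective hπ
  have hPn : (P : Subgroup (G ⧸ L)).Normal := inferInstance
  have hPQ : (P : Subgroup (G ⧸ L)) = (Q : Subgroup G).map π := rfl
  have hAQ : A ≤ Q := fun a ha =>
    hQ.subset ⟨1, H.one_mem, a, ha, one_mul a⟩
  have hAP : A.map π ≤ P := map_mono hAQ
  obtain ⟨N, hpN, hPN, hcommute⟩ := P.exists_commuting_complement_of_isNilpotent hGL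
  have hsup : ((A.map π ⊔ N : Subgroup (G ⧸ L)) : Set (G ⧸ L)) = (A.map π : Set (G ⧸ L)) * N := by
    refine coe_mul_of_left_le_normalizer_right _ _ fun a ha => mem_normalizer_iff.mpr fun n => ?_
    have hconj (b : G ⧸ L) (hb : b ∈ P) (m : G ⧸ L) (hm : m ∈ N) : b * m * b⁻¹ = m := by
      rw [hcommute b hb m hm, mul_inv_cancel_right]
    refine ⟨fun hn => (hconj a (hAP ha) n hn).symm ▸ hn, fun hn => ?_⟩
    have := hconj a⁻¹ (P.inv_mem (hAP ha)) _ hn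
    rw [show n = a⁻¹ * (a * n * a⁻¹) * a⁻¹⁻¹ by group, this]
    exact hn
  let K := (A.map π ⊔ N).comap π
  have hLK : L ≤ K := fun l hl => by
    have : π l = 1 := (QuotientGroup.eq_one_iff l).mpr hl
    simp [K, this]
  have hAK : A ≤ K := map_le_iff_le_comap.mp le_sup_left
  refine ⟨K, Set.eq_univ_of_forall fun g => ?_, fun S => ?_⟩
  · obtain ⟨a, ⟨q, hq, rfl⟩, n, hn, han⟩ := hPN (π g)
    obtain ⟨h, hh, k, hk, rfl⟩ := hQ.superset hq
    refine ⟨h, hh, h⁻¹ * g, ?_, by simp⟩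
    change π (h⁻¹ * g) ∈ A.map π ⊔ N
    have : π (h⁻¹ * g) = π k * n := by
      rw [map_mul, ← han]
      change π h⁻¹ * (π (h * k) * n) = _
      simp [mul_assoc]
    rw [this]
    exact mul_mem_sup (mem_map_of_mem π hk) hn
  · have hSp : IsPGroup p ((S : Subgroup K).map K.subtype) := S.isPGroup'.map K.subtype
    have hSLA : (S : Subgroup K).map K.subtype ≤ L ⊔ A := by
      intro s hs
      have hsP : π s ∈ P := by
        obtain ⟨R, hR⟩ := (hSp.map π).exists_le_sylow
        have := P.unique_of_normal hPn
        exact Subsingleton.elim R P ▸ hR (mem_map_of_mem π hs)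
      have hs' : s ∈ K := map_subtype_le _ hs
      have hsK : π s ∈ ((A.map π ⊔ N : Subgroup (G ⧸ L)) : Set (G ⧸ L)) := hs'
      rw [hsup] at hsK
      obtain ⟨a, ha, n, hn, han⟩ := hsK
      have hn1 : n = 1 := by
        refine eq_one_of_mem_isPGroup_of_not_dvd P.isPGroup' hpN ?_ hn
        rw [eq_inv_mul_of_mul_eq han]
        exact P.mul_mem (P.inv_mem (hAP ha)) hsP
      have : s ∈ (A.map π).comap π := by
        rw [mem_comap, ← han, hn1]
        simpa using ha
      rwa [comap_map_eq, QuotientGroup.ker_mk', sup_comm] at this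
    obtain ⟨l, hl, hle⟩ := hA.exists_le_map_conj_of_le_sup hpL hSp hSLA
    refine ⟨l, hl, ?_⟩
    have hconjK : A.map (MulAut.conj l).toMonoidHom ≤ K := by
      rintro _ ⟨a, ha, rfl⟩
      exact K.mul_mem (K.mul_mem (hLK hl) (hAK ha)) (K.inv_mem (hLK hl))
    have hmax := S.is_maximal' ((hA.map (MulAut.conj l).toMonoidHom).comap_subtype (K := K))
      (map_le_iff_le_comap.mp hle)
    rw [← map_subgroupOf_eq_of_le hconjK]
    exact congrArg (map K.subtype) hmax.symm

end Supplement

/-- Lemma 2.8. -/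
theorem lemma28 {G : Type*} [Group G] [Finite G]
    (hsol : IsSolvable G) (hbt : IsBTGroup G)
    (L : Subgroup G) (hL : IsNilpotentResidual L)
    (p : ℕ) (hp : p.Prime) (hpG : p ∣ Nat.card G) (hpL : ¬ p ∣ Nat.card L)
    (H : Subgroup G) (hH : IsPGroup p H)
    (Kp : Subgroup G) (hKp : IsPGroup p Kp)
    (hSyl : ∃ Q : Sylow p G, (H : Set G) * (Kp : Set G) = ((Q : Subgroup G) : Set G))
    (hcomm : ⁅H, ⨆ l ∈ L, Kp.map (MulAut.conj l).toMonoidHom⁆ ≤ pCore p G) :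
    IsSSPermutable H := by
  have : Fact p.Prime := ⟨hp⟩
  have : L.Normal := hL.1
  obtain ⟨hGL, hLmin⟩ := hL.2
  obtain ⟨Q, hQ⟩ := hSyl
  have hsolv : Group.IsSolvable G := hsol
  have hLcomm : L ≤ commutator G :=
    hLmin (commutator G) (inferInstanceAs (Group.IsNilpotent (Abelianization G)))
  have hOn : (pCore p G).Normal := Subgroup.sSup_normal _ fun N hN => hN.1
  have hO : IsPGroup p (pCore p G) :=
    Sylow.sSup_of_normal _ (fun N hN => hN.2) fun N hN => hN.1
  obtain ⟨K, hHK, hK⟩ := exists_supplement_sylow_eq_map_conj hGL hpL hKp Q hQ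
  refine ⟨K, hHK, fun q _ S => ?_⟩
  rcases eq_or_ne q p with rfl | hne
  · obtain ⟨l, hl, hS⟩ := hK S
    rw [hS]
    exact mul_map_conj_comm_of_commutator_le hpL hO hH (hQ ▸ hO.le_sylow_of_normal Q) hcomm hl
  · exact hbt.isSemipermutable_of_isPGroup hLcomm hGL hpL hH _
      (IsPGroup.coprime_card_of_ne p q hne.symm _ _ hH (S.isPGroup'.map K.subtype))
end
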